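/- arXiv:1805.00260 — 4 statements merged into one kernel-verified Lean document; each statement's English description precedes it below -/
import Mathlib

section
/- If G is a finite bipartite graph with no isolated vertices in which every vertex has even degree, then š(G) ≤ Σ_{d ∈ D(G)} C(Δ(G)/2, d/2), where D(G) denotes the set of vertex degrees occurring in G, Δ(G) the maximum degree, and C(n,k) the binomial coefficient. -/
open SimpleGraph Finset

/-- A proper edge coloring of `G` with colors in `ℕ`: distinct edges of `G`
sharing an endpoint receive distinct colors. -/
def IsProperEdgeColoring {V : Type*} (G : SimpleGraph V) (c : Sym2 V → ℕ) : Prop :=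
  ∀ e₁ ∈ G.edgeSet, ∀ e₂ ∈ G.edgeSet, e₁ ≠ e₂ → (∃ v, v ∈ e₁ ∧ v ∈ e₂) → c e₁ ≠ c e₂

/-- The palette of a vertex `v`: the set of colors appearing on edges of `G` incident with `v`. -/
def palette {V : Type*} (G : SimpleGraph V) (c : Sym2 V → ℕ) (v : V) : Set ℕ :=
  {n | ∃ e ∈ G.edgeSet, v ∈ e ∧ c e = n}

/-- The palette index of `G`: the minimum number of distinct palettes occurring in a
proper edge coloring of `G`. -/
noncomputable def paletteIndex {V : Type*} (G : SimpleGraph V) : ℕ :=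
  sInf {k | ∃ c : Sym2 V → ℕ, IsProperEdgeColoring G c ∧ (Set.range (palette G c)).ncard = k}

/-!
A bipartite multigraph is encoded as an edge type `E` with two endpoint maps `a : E → X` and
`b : E → Y`; the degree of a vertex is the size of its fiber, and an edge coloring `c` is proper
when `e ↦ (a e, c e)` and `e ↦ (b e, c e)` are injective.

Let `G` be an even bipartite graph and `K = Δ(G) / 2`. Pairing up the edges at every vertex turns
`G` into a 2-regular bipartite multigraph, and a proper 2-coloring of it splits the edges of `G`
into two classes, each containing exactly half of the edges at every vertex. Orient one class from
the first side of the bipartition to the second and the other class backwards: in-degree and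
out-degree of `v` are then both `d(v) / 2`. Add `K - d(v) / 2` loops at every `v` and regard tails
and heads as the two sides of a `K`-regular bipartite multigraph, which by König's theorem is
properly `K`-colorable. The colors missing among the arcs leaving `v` are those of the loops at `v`,
and the same holds for the arcs entering `v`, so both sets of arcs carry the same `d(v) / 2` colors.
Coloring each edge by the pair (arc color, class) makes the palette of `v` equal to `I × {0, 1}`
for some `d(v) / 2`-element set `I` of arc colors.
-/

namespace PaletteIndex

section ExtendColoring

variable {E X : Type*} [DecidableEq E]

/-- Extends a coloring of the edges outside `M` by giving all edges of `M` one new color. -/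
def extendColoring (M : Finset E) {k : ℕ} (c : {e // e ∉ M} → Fin k) (e : E) :
    Fin (k + 1) :=
  if he : e ∈ M then Fin.last k else (c ⟨e, he⟩).castSucc

theorem bijective_extendColoring {a : E → X} {M : Finset E}
    (hM : Set.BijOn a M Set.univ) {k : ℕ} {c : {e // e ∉ M} → Fin k}
    (hc : Function.Bijective fun e : {e // e ∉ M} ↦ (a e, c e)) :
    Function.Bijective fun e ↦ (a e, extendColoring M c e) := by
  constructor
  · intro e f hef
    obtain ⟨ha, hcol⟩ := Prod.mk.inj hef
    by_cases he : e ∈ M <;> by_cases hf : f ∈ M <;>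
      simp only [extendColoring, he, hf, dite_true, dite_false] at hcol
    · exact hM.injOn he hf ha
    · exact absurd hcol.symm (Fin.castSucc_ne_last _)
    · exact absurd hcol (Fin.castSucc_ne_last _)
    · exact congrArg Subtype.val <|
        hc.injective (a₁ := ⟨e, he⟩) (a₂ := ⟨f, hf⟩) (Prod.ext ha (Fin.castSucc_injective k hcol))
  · rintro ⟨x, i⟩
    cases i using Fin.lastCases with
    | last =>
      obtain ⟨e, he, rfl⟩ := hM.surjOn (Set.mem_univ x)
      exact ⟨e, by simp [extendColoring, mem_coe.1 he]⟩
    | cast i =>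
      obtain ⟨⟨e, he⟩, hei⟩ := hc.surjective (x, i)
      obtain ⟨rfl, rfl⟩ := Prod.mk.inj hei
      exact ⟨e, by simp [extendColoring, he]⟩

end ExtendColoring

section BipartiteMultigraph

variable {E X Y : Type*} [Fintype E] [DecidableEq X] [DecidableEq Y]

theorem card_filter_mem_eq_mul (a : E → X) {k : ℕ} (ha : ∀ x, #{e | a e = x} = k) (T : Finset X) :
    #{e | a e ∈ T} = #T * k := by
  rw [← sum_card_fiberwise_eq_card_filter, sum_const_nat fun x _ ↦ ha x]

theorem finite_of_card_fiber_pos (a : E → X) (ha : ∀ x, 0 < #{e | a e = x}) : Finite X :=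
  Finite.of_surjective a fun x ↦ by simpa [Finset.Nonempty] using card_pos.1 (ha x)

theorem exists_perfectMatching_of_card_fiber_eq (a : E → X) (b : E → Y) {k : ℕ} (hk : 0 < k)
    (ha : ∀ x, #{e | a e = x} = k) (hb : ∀ y, #{e | b e = y} = k) :
    ∃ M : Finset E, Set.BijOn a M Set.univ ∧ Set.BijOn b M Set.univ := by
  classical
  have := finite_of_card_fiber_pos a fun x ↦ (ha x).symm ▸ hk
  have := finite_of_card_fiber_pos b fun y ↦ (hb y).symm ▸ hk
  have := Fintype.ofFinite X
  have := Fintype.ofFinite Y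
  have hall (T : Finset X) : #T ≤ #(T.biUnion fun x ↦ image b {e | a e = x}) := by
    refine Nat.le_of_mul_le_mul_right ?_ hk
    rw [← card_filter_mem_eq_mul a ha, ← card_filter_mem_eq_mul b hb]
    refine card_le_card fun e he ↦ ?_
    simp only [mem_filter_univ, mem_biUnion, mem_image] at he ⊢
    exact ⟨a e, he, e, rfl, rfl⟩
  obtain ⟨g, g_inj, hg⟩ := (all_card_le_biUnion_card_iff_exists_injective _).1 hall
  have card_eq : Fintype.card X = Fintype.card Y := by
    have card_a := card_filter_mem_eq_mul a ha univ
    have card_b := card_filter_mem_eq_mul b hb univ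
    simp only [mem_univ, filter_true, card_univ] at card_a card_b
    exact Nat.eq_of_mul_eq_mul_right hk (card_a.symm.trans card_b)
  have g_bij : Function.Bijective g :=
    (Fintype.bijective_iff_injective_and_card g).2 ⟨g_inj, card_eq⟩
  simp only [mem_image, mem_filter_univ] at hg
  choose m ham hbm using hg
  have m_inj : Function.Injective m := Function.LeftInverse.injective ham
  refine ⟨univ.image m, ?_, ?_⟩ <;> rw [coe_image, coe_univ, ← Set.bijOn_comp_iff m_inj.injOn]
  · simp [Function.comp_def, ham]
  · simpa only [Function.comp_def, hbm, Set.bijOn_univ] using g_bij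

theorem card_fiber_compl_add_one [DecidableEq E] (a : E → X) {M : Finset E}
    (hM : Set.BijOn a M Set.univ) (x : X) :
    #{e : {e // e ∉ M} | a e = x} + 1 = #{e | a e = x} := by
  obtain ⟨m, hm, rfl⟩ := hM.surjOn (Set.mem_univ x)
  have map_fiber : ({e : {e // e ∉ M} | a e = a m} : Finset _).map (.subtype _) =
      ({e | a e = a m} : Finset E).erase m := by
    ext e
    have mem_iff_eq (he : a e = a m) : e ∈ M ↔ e = m :=
      ⟨fun h ↦ hM.injOn h hm he, fun h ↦ h ▸ hm⟩
    simp only [mem_map, mem_filter_univ, Function.Embedding.subtype_apply, Subtype.exists,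
      exists_and_left, exists_prop, mem_erase]
    grind
  rw [← card_map, map_fiber, card_erase_add_one (by simp)]

theorem exists_coloring_of_card_fiber_eq (a : E → X) (b : E → Y) {k : ℕ}
    (ha : ∀ x, #{e | a e = x} = k) (hb : ∀ y, #{e | b e = y} = k) :
    ∃ c : E → Fin k, Function.Bijective (fun e ↦ (a e, c e)) ∧
      Function.Bijective (fun e ↦ (b e, c e)) := by
  classical
  induction k generalizing E with
  | zero =>
    have : IsEmpty E :=
      ⟨fun e ↦ notMem_empty e (card_eq_zero.1 (ha (a e)) ▸ mem_filter_univ e |>.2 rfl)⟩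
    exact ⟨isEmptyElim, ⟨isEmptyElim, fun q ↦ q.2.elim0⟩, ⟨isEmptyElim, fun q ↦ q.2.elim0⟩⟩
  | succ k ih =>
    obtain ⟨M, hMa, hMb⟩ := exists_perfectMatching_of_card_fiber_eq a b k.succ_pos ha hb
    obtain ⟨c, hca, hcb⟩ := ih (E := {e // e ∉ M}) (fun e ↦ a e) (fun e ↦ b e)
      (fun x ↦ by simpa [ha x] using card_fiber_compl_add_one a hMa x)
      (fun y ↦ by simpa [hb y] using card_fiber_compl_add_one b hMb y)
    exact ⟨extendColoring M c, bijective_extendColoring hMa hca, bijective_extendColoring hMb hcb⟩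

theorem exists_refinement_of_dvd_card_fiber (a : E → X) {k : ℕ} (ha : ∀ x, k ∣ #{e | a e = x}) :
    ∃ p : E → Σ x, Fin (#{e | a e = x} / k), (∀ e, (p e).1 = a e) ∧ ∀ q, #{e | p e = q} = k := by
  have nonempty_equiv (x : X) :
      Nonempty ({e // a e = x} ≃ Fin (#{e | a e = x} / k) × Fin k) := by
    refine Fintype.card_eq.1 ?_
    rw [Fintype.card_subtype, Fintype.card_prod, Fintype.card_fin, Fintype.card_fin,
      Nat.div_mul_cancel (ha x)]
  let φ : E ≃ (Σ x, Fin (#{e | a e = x} / k)) × Fin k :=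
    (Equiv.sigmaFiberEquiv a).symm.trans <|
      (Equiv.sigmaCongrRight fun x ↦ (nonempty_equiv x).some).trans <|
        (Equiv.sigmaProdDistrib _ _).symm
  refine ⟨fun e ↦ (φ e).1, fun _ ↦ rfl, fun q ↦ ?_⟩
  calc #{e | (φ e).1 = q}
      = #({q} ×ˢ (univ : Finset (Fin k))) :=
        card_bijective φ φ.bijective fun e ↦ by
          simp only [mem_filter_univ, mem_product, mem_singleton, mem_univ, and_true]
    _ = k := by simp

theorem card_filter_color_eq_of_bijective {C : Type*} [DecidableEq C] {n : X → ℕ}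
    {p : E → Σ x, Fin (n x)} {c : E → C} (h : Function.Bijective fun e ↦ (p e, c e)) (x : X)
    (i : C) :
    #{e | (p e).1 = x ∧ c e = i} = n x := by
  calc #{e | (p e).1 = x ∧ c e = i}
      = #((({x} : Finset X).sigma fun x ↦ (univ : Finset (Fin (n x)))) ×ˢ {i}) :=
        card_bijective _ h fun e ↦ by
          simp only [mem_filter_univ, mem_product, mem_sigma, mem_singleton, mem_univ, and_true]
    _ = n x := by simp

theorem exists_equitable_coloring_of_dvd_card_fiber (a : E → X) (b : E → Y) {k : ℕ}
    (ha : ∀ x, k ∣ #{e | a e = x}) (hb : ∀ y, k ∣ #{e | b e = y}) :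
    ∃ c : E → Fin k, (∀ x i, #{e | a e = x ∧ c e = i} = #{e | a e = x} / k) ∧
      ∀ y i, #{e | b e = y ∧ c e = i} = #{e | b e = y} / k := by
  obtain ⟨p, hp, card_p⟩ := exists_refinement_of_dvd_card_fiber a ha
  obtain ⟨q, hq, card_q⟩ := exists_refinement_of_dvd_card_fiber b hb
  obtain ⟨c, hpc, hqc⟩ := exists_coloring_of_card_fiber_eq p q card_p card_q
  refine ⟨c, fun x i ↦ ?_, fun y i ↦ ?_⟩
  · simpa only [hp] using card_filter_color_eq_of_bijective hpc x i
  · simpa only [hq] using card_filter_color_eq_of_bijective hqc y i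

end BipartiteMultigraph

section BalancedDigraph

variable {E V : Type*} [Fintype E] [DecidableEq V]

theorem image_inl_fiber_eq_compl {L C : Type*} [Fintype L] [Fintype C] [DecidableEq C] {a : E → V}
    {l : L → V} {c : E ⊕ L → C} (h : Function.Bijective fun e ↦ (Sum.elim a l e, c e)) (v : V) :
    image (c ∘ Sum.inl) {e | a e = v} = (image (c ∘ Sum.inr) {j | l j = v})ᶜ := by
  ext i
  simp only [mem_image, mem_filter_univ, mem_compl, Function.comp_apply]
  constructor
  · rintro ⟨e, rfl, rfl⟩ ⟨j, hj, hc⟩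
    exact Sum.inr_ne_inl (h.injective (Prod.ext hj hc))
  · intro hi
    obtain ⟨e | j, hei⟩ := h.surjective (v, i) <;> obtain ⟨hv, hc⟩ := Prod.mk.inj hei
    · exact ⟨e, hv, hc⟩
    · exact absurd ⟨j, hv, hc⟩ hi

theorem card_fiber_sumElim {L : Type*} [Fintype L] (a : E → V) (l : L → V) (v : V) :
    #{e | Sum.elim a l e = v} = #{e | a e = v} + #{j | l j = v} := by
  simp only [card_filter, Fintype.sum_sum_type, Sum.elim_inl, Sum.elim_inr]
  rfl

theorem card_fiber_sigma_fst [Fintype V] (n : V → ℕ) (v : V) :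
    #{q : Σ v, Fin (n v) | q.1 = v} = n v := by
  rw [← Fintype.card_subtype, Fintype.card_congr (Equiv.sigmaSubtype v), Fintype.card_fin]

theorem exists_coloring_image_tail_eq_image_head [Finite V] (tail head : E → V) {K : ℕ}
    (hbal : ∀ v, #{e | tail e = v} = #{e | head e = v}) (hK : ∀ v, #{e | tail e = v} ≤ K) :
    ∃ c : E → Fin K, Function.Injective (fun e ↦ (tail e, c e)) ∧
      Function.Injective (fun e ↦ (head e, c e)) ∧
      ∀ v, image c {e | tail e = v} = image c {e | head e = v} := by
  have := Fintype.ofFinite V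
  let loop : (Σ v, Fin (K - #{e | tail e = v})) → V := Sigma.fst
  have card_loop (v : V) : #{j | loop j = v} = K - #{e | tail e = v} := card_fiber_sigma_fst _ v
  obtain ⟨c, htail, hhead⟩ := exists_coloring_of_card_fiber_eq
    (Sum.elim tail loop) (Sum.elim head loop) (k := K)
    (fun v ↦ by rw [card_fiber_sumElim, card_loop, Nat.add_sub_cancel' (hK v)])
    (fun v ↦ by rw [card_fiber_sumElim, card_loop, ← hbal v, Nat.add_sub_cancel' (hK v)])
  refine ⟨c ∘ Sum.inl, htail.injective.comp Sum.inl_injective,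
    hhead.injective.comp Sum.inl_injective, fun v ↦ ?_⟩
  rw [image_inl_fiber_eq_compl htail v, image_inl_fiber_eq_compl hhead v]

end BalancedDigraph

section EvenBipartiteMultigraph

variable {E V : Type*} [Fintype E] [DecidableEq V]

theorem exists_halving_of_even_card_fiber (ends : Fin 2 → E → V)
    (heven : ∀ s v, Even #{e | ends s e = v}) :
    ∃ σ : E → Fin 2, ∀ s v t, #{e | ends s e = v ∧ σ e = t} = #{e | ends s e = v} / 2 := by
  obtain ⟨σ, hσ₀, hσ₁⟩ := exists_equitable_coloring_of_dvd_card_fiber (ends 0) (ends 1)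
    (fun v ↦ (heven 0 v).two_dvd) (fun v ↦ (heven 1 v).two_dvd)
  exact ⟨σ, Fin.forall_fin_two.2 ⟨hσ₀, hσ₁⟩⟩

theorem exists_coloring_image_halves_eq [Finite V] (ends : Fin 2 → E → V) {K : ℕ} {σ : E → Fin 2}
    (hσ : ∀ s v t, #{e | ends s e = v ∧ σ e = t} = #{e | ends s e = v} / 2)
    (hK : ∀ s v, #{e | ends s e = v} / 2 ≤ K) :
    ∃ c : E → Fin K, (∀ s, Function.Injective fun e ↦ (ends s e, c e, σ e)) ∧
      ∀ s v t, image c {e | ends s e = v ∧ σ e = t} = image c {e | ends s e = v ∧ σ e = s} := by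
  let tail (e : E) : Fin 2 × V := (σ e, ends (σ e) e)
  let head (e : E) : Fin 2 × V := ((σ e).rev, ends (σ e).rev e)
  have tail_eq_iff (e s v) : tail e = (s, v) ↔ ends s e = v ∧ σ e = s := by grind
  have head_eq_iff (e s v) : head e = (s, v) ↔ ends s e = v ∧ σ e = s.rev := by grind
  obtain ⟨c, htail, hhead, himage⟩ := exists_coloring_image_tail_eq_image_head tail head (K := K)
    (fun ⟨s, v⟩ ↦ by simp only [tail_eq_iff, head_eq_iff, hσ])
    (fun ⟨s, v⟩ ↦ by simpa only [tail_eq_iff, hσ] using hK s v)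
  have eq_or_eq_rev (s t : Fin 2) : t = s ∨ t = s.rev := by decide +revert
  refine ⟨c, fun s e f hef ↦ ?_, fun s v t ↦ ?_⟩
  · simp only [Prod.mk.injEq] at hef
    obtain ⟨hends, hc, hside⟩ := hef
    rcases eq_or_eq_rev s (σ e) with hs | hs
    · have htail_eq : tail e = tail f :=
        ((tail_eq_iff e s _).2 ⟨hends, hs⟩).trans ((tail_eq_iff f s _).2 ⟨rfl, hside ▸ hs⟩).symm
      exact htail (Prod.ext htail_eq hc)
    · have hhead_eq : head e = head f :=
        ((head_eq_iff e s _).2 ⟨hends, hs⟩).trans ((head_eq_iff f s _).2 ⟨rfl, hside ▸ hs⟩).symm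
      exact hhead (Prod.ext hhead_eq hc)
  · rcases eq_or_eq_rev s t with rfl | rfl
    · rfl
    · simpa only [tail_eq_iff, head_eq_iff] using (himage (s, v)).symm

theorem exists_coloring_image_fiber_eq_product_univ [Finite V] (ends : Fin 2 → E → V) {K : ℕ}
    (heven : ∀ s v, Even #{e | ends s e = v}) (hK : ∀ s v, #{e | ends s e = v} / 2 ≤ K) :
    ∃ c : E → Fin K × Fin 2, (∀ s, Function.Injective fun e ↦ (ends s e, c e)) ∧
      ∀ s v, ∃ I, #I = #{e | ends s e = v} / 2 ∧ image c {e | ends s e = v} = I ×ˢ univ := by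
  obtain ⟨σ, hσ⟩ := exists_halving_of_even_card_fiber ends heven
  obtain ⟨c, c_inj, c_image⟩ := exists_coloring_image_halves_eq ends hσ hK
  refine ⟨fun e ↦ (c e, σ e), c_inj, fun s v ↦ ⟨image c {e | ends s e = v ∧ σ e = s}, ?_, ?_⟩⟩
  · rw [card_image_of_injOn fun e he f hf hef ↦ c_inj s ?_, hσ]
    grind
  · ext ⟨i, t⟩
    rw [mem_product, ← c_image s v t]
    grind

end EvenBipartiteMultigraph

theorem ncard_range_le_sum_choose {ι κ α β : Type*} [Fintype α] (S : ι → β) (f : Finset α → β)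
    (D : Finset κ) (n : κ → ℕ) (h : ∀ i, ∃ d ∈ D, ∃ I : Finset α, #I = n d ∧ S i = f I) :
    (Set.range S).ncard ≤ ∑ d ∈ D, (Fintype.card α).choose (n d) := by
  classical
  let U : Finset (Finset α) := D.biUnion fun d ↦ powersetCard (n d) univ
  have range_subset : Set.range S ⊆ U.image f := by
    rintro _ ⟨i, rfl⟩
    obtain ⟨d, hd, I, hI, hS⟩ := h i
    exact mem_image.2 ⟨I, mem_biUnion.2 ⟨d, hd, mem_powersetCard_univ.2 hI⟩, hS.symm⟩
  calc (Set.range S).ncard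
      ≤ #(U.image f) := by simpa only [Set.ncard_coe_finset] using Set.ncard_le_ncard range_subset
    _ ≤ #U := card_image_le
    _ ≤ ∑ d ∈ D, #(powersetCard (n d) (univ : Finset α)) := card_biUnion_le
    _ = ∑ d ∈ D, (Fintype.card α).choose (n d) := by simp only [card_powersetCard, card_univ]

section Graph

variable {V : Type*} {G : SimpleGraph V}

theorem paletteIndex_le_ncard_range {C : Type*} [Countable C] (c : G.edgeSet → C)
    (hc : ∀ (e f : G.edgeSet) (v : V), v ∈ e.1 → v ∈ f.1 → c e = c f → e = f) :
    paletteIndex G ≤ (Set.range fun v ↦ c '' {e | v ∈ e.1}).ncard := by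
  classical
  obtain ⟨encode, encode_inj⟩ := exists_injective_nat C
  let col (e : Sym2 V) : ℕ := if he : e ∈ G.edgeSet then encode (c ⟨e, he⟩) else 0
  have col_edge (e : G.edgeSet) : col e = encode (c e) := dif_pos e.2
  have col_proper : IsProperEdgeColoring G col := by
    rintro e he f hf hne ⟨v, hve, hvf⟩ hcol
    rw [col_edge ⟨e, he⟩, col_edge ⟨f, hf⟩] at hcol
    exact hne (congrArg Subtype.val (hc _ _ v hve hvf (encode_inj hcol)))
  have palette_eq (v : V) : palette G col v = encode '' (c '' {e | v ∈ e.1}) := by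
    ext n
    simp only [palette, Set.mem_ofPred_eq, Set.image_image, Set.mem_image, ← col_edge,
      Subtype.exists, exists_and_left, exists_prop]
    grind
  calc paletteIndex G ≤ (Set.range (palette G col)).ncard := Nat.sInf_le ⟨col, col_proper, rfl⟩
    _ = ((encode '' ·) '' Set.range fun v ↦ c '' {e | v ∈ e.1}).ncard := by
      rw [← Set.range_comp]
      exact congrArg (Set.ncard <| Set.range ·) (funext palette_eq)
    _ = _ := Set.ncard_image_of_injective _ encode_inj.image_injective

theorem eq_of_mem_edge_of_color_eq {α : Type*} (C : G.Coloring α) {e : Sym2 V} (he : e ∈ G.edgeSet)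
    {u v : V} (hu : u ∈ e) (hv : v ∈ e) (huv : C u = C v) : u = v := by
  by_contra hne
  obtain rfl := (Sym2.mem_and_mem_iff hne).1 ⟨hu, hv⟩
  exact C.valid he huv

theorem exists_mem_edge_color_eq (C : G.Coloring (Fin 2)) (s : Fin 2) (e : G.edgeSet) :
    ∃ v ∈ e.1, C v = s := by
  obtain ⟨⟨u, v⟩, he⟩ := e
  have hne : C u ≠ C v := C.valid he
  obtain h | h : C u = s ∨ C v = s := by omega
  · exact ⟨u, Sym2.mem_mk_left u v, h⟩
  · exact ⟨v, Sym2.mem_mk_right u v, h⟩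

/-- The endpoint of the edge `e` in the class `s` of the bipartition given by the 2-coloring `C`. -/
noncomputable def endpoint (C : G.Coloring (Fin 2)) (s : Fin 2) (e : G.edgeSet) : V :=
  (exists_mem_edge_color_eq C s e).choose

theorem endpoint_eq_iff (C : G.Coloring (Fin 2)) (s : Fin 2) (e : G.edgeSet) (v : V) :
    endpoint C s e = v ↔ v ∈ e.1 ∧ C v = s := by
  obtain ⟨hmem, hcolor⟩ : endpoint C s e ∈ e.1 ∧ C (endpoint C s e) = s :=
    (exists_mem_edge_color_eq C s e).choose_spec
  constructor
  · rintro rfl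
    exact ⟨hmem, hcolor⟩
  · rintro ⟨hv, rfl⟩
    exact eq_of_mem_edge_of_color_eq C e.2 hmem hv hcolor

theorem card_endpoint_fiber [Fintype G.edgeSet] [DecidableEq V] (C : G.Coloring (Fin 2))
    (s : Fin 2) (v : V) [Fintype (G.neighborSet v)] :
    #{e | endpoint C s e = v} = if C v = s then G.degree v else 0 := by
  simp only [endpoint_eq_iff]
  split_ifs with hs
  · simp only [hs, and_true]
    rw [← G.card_incidenceFinset_eq_degree, ← card_map (.subtype _)]
    congr 1
    ext e
    simp [incidenceSet, and_comm]
  · simp [hs]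

theorem exists_coloring_image_incident_eq_prod_univ [Fintype V] [DecidableRel G.Adj]
    (C : G.Coloring (Fin 2)) (heven : ∀ v, Even (G.degree v)) :
    ∃ c : G.edgeSet → Fin (G.maxDegree / 2) × Fin 2,
      (∀ (e f : G.edgeSet) (v : V), v ∈ e.1 → v ∈ f.1 → c e = c f → e = f) ∧
      ∀ v, ∃ I : Finset (Fin (G.maxDegree / 2)), #I = G.degree v / 2 ∧
        c '' {e | v ∈ e.1} = (I : Set _) ×ˢ Set.univ := by
  have := Classical.decEq V
  have even_fiber (s v) : Even #{e | endpoint C s e = v} := by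
    rw [card_endpoint_fiber]
    split_ifs
    exacts [heven v, Even.zero]
  have half_fiber_le (s v) : #{e | endpoint C s e = v} / 2 ≤ G.maxDegree / 2 := by
    rw [card_endpoint_fiber]
    split_ifs
    exacts [Nat.div_le_div_right (G.degree_le_maxDegree v), Nat.zero_le _]
  have endpoint_eq {e : G.edgeSet} {v : V} (hv : v ∈ e.1) : endpoint C (C v) e = v :=
    (endpoint_eq_iff C _ e v).2 ⟨hv, rfl⟩
  obtain ⟨c, c_inj, c_image⟩ :=
    exists_coloring_image_fiber_eq_product_univ (endpoint C) even_fiber half_fiber_le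
  refine ⟨c, fun e f v he hf hef ↦ ?_, fun v ↦ ?_⟩
  · exact c_inj (C v) (Prod.ext ((endpoint_eq he).trans (endpoint_eq hf).symm) hef)
  · obtain ⟨I, card_I, image_eq⟩ := c_image (C v) v
    refine ⟨I, by simpa only [card_endpoint_fiber, if_true] using card_I, ?_⟩
    simpa [endpoint_eq_iff] using Finset.coe_inj.2 image_eq

end Graph

end PaletteIndex

open PaletteIndex in
/-- If `G` is an even bipartite graph (no isolated vertices), then
`š(G) ≤ ∑_{d ∈ D(G)} C(Δ(G)/2, d/2)`. -/
theorem palette_index_even_bipartite {V : Type*} [Fintype V] [DecidableEq V]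
    (G : SimpleGraph V) [DecidableRel G.Adj]
    (hbip : G.Colorable 2)
    (hiso : ∀ v : V, 0 < G.degree v)
    (heven : ∀ v : V, Even (G.degree v)) :
    paletteIndex G ≤
      ∑ d ∈ Finset.univ.image (fun v => G.degree v), Nat.choose (G.maxDegree / 2) (d / 2) := by
  obtain ⟨C⟩ := hbip
  obtain ⟨c, c_proper, c_image⟩ := exists_coloring_image_incident_eq_prod_univ C heven
  calc paletteIndex G
      ≤ (Set.range fun v ↦ c '' {e | v ∈ e.1}).ncard := paletteIndex_le_ncard_range c c_proper
    _ ≤ ∑ d ∈ univ.image (fun v ↦ G.degree v),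
          (Fintype.card (Fin (G.maxDegree / 2))).choose (d / 2) :=
      ncard_range_le_sum_choose _ (fun I ↦ (I : Set _) ×ˢ Set.univ) _ (· / 2) fun v ↦
        ⟨G.degree v, mem_image_of_mem _ (mem_univ v), c_image v⟩
    _ = _ := by rw [Fintype.card_fin]
end

section
/- If G is a finite bipartite graph with no isolated vertices, then š(G) ≤ Σ_{d ∈ D^odd(G)} C(⌈Δ(G)/2⌉, (d+1)/2)·(d+1) + Σ_{d ∈ D^even(G)} C(⌈Δ(G)/2⌉, d/2), where D^odd(G) and D^even(G) denote respectively the sets of odd and even vertex degrees occurring in G, Δ(G) the maximum degree, and C(n,k) the binomial coefficient. -/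
open SimpleGraph Finset

/-!
Orient the edges of `G` so that every vertex `v` of degree `d` has indegree and outdegree at most
`⌈d / 2⌉`: pair up the edges at each vertex, which splits `G` into a bipartite graph of maximum
degree at most `2`, color its edges properly with two colors (König), and direct the edges of one
color from one side of the bipartition to the other and the remaining edges backwards.

Let `k = ⌈Δ(G) / 2⌉` and add `k - ⌈d / 2⌉` loops at each `v`. Tails and heads are the two sides of
a bipartite multigraph of maximum degree at most `k`, so by König the arcs have a `k`-coloring in
which arcs with a common tail, and arcs with a common head, get different colors. The colors of
the loops at `v` are avoided by all other arcs at `v`, which therefore use only `⌈d / 2⌉` colors.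
Splitting each color in two according to the side of the bipartition containing the tail makes the
coloring proper, and the palette of `v` becomes a `d`-subset of the `2 ⌈d / 2⌉` colors in
`⌈d / 2⌉` pairs. There are at most `C(k, ⌈d / 2⌉) * C(2 ⌈d / 2⌉, d)` such sets.
-/

section EdgeColoring

variable {E A B C : Type*}

/-- If `a e` is an endpoint of each edge `e` of a multigraph, the coloring `c` is proper at these
endpoints: edges with the same endpoint `a e` have different colors. A bipartite multigraph is
encoded by two maps `a : E → A` and `b : E → B`, and a directed one by `tail head : E → W`, so that
parallel edges (and loops) are allowed. -/
def IsProperAt (a : E → A) (c : E → C) : Prop :=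
  ∀ ⦃e e' : E⦄, a e = a e' → c e = c e' → e = e'

theorem IsProperAt.dite_mem_range {ι : Type*} {k : ℕ} {a : E → A} {m : ι → E}
    [DecidablePred (· ∈ Set.range m)] (hm : Function.Injective (a ∘ m))
    {c : {e // e ∉ Set.range m} → Fin k} (hc : IsProperAt (fun e ↦ a e.1) c) :
    IsProperAt a fun e ↦ if he : e ∈ Set.range m then 0 else (c ⟨e, he⟩).succ := by
  intro e e' hend hcol
  by_cases he : e ∈ Set.range m <;> by_cases he' : e' ∈ Set.range m <;>
    simp only [he, he', dite_true, dite_false, Fin.succ_ne_zero, (Fin.succ_ne_zero _).symm] at hcol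
  · obtain ⟨i, rfl⟩ := he
    obtain ⟨j, rfl⟩ := he'
    rw [hm hend]
  · exact congrArg Subtype.val (hc hend (Fin.succ_injective _ hcol))

section Fibers

variable [Fintype E] [DecidableEq A]

theorem card_fiber_sumElim {F : Type*} [Fintype F] (a : E → A) (f : F → A) (x : A) :
    #{e | Sum.elim a f e = x} = #{e | a e = x} + #{e | f e = x} := by
  simp only [card_filter, Fintype.sum_sum_type]
  rfl

theorem card_fiber_fst_comp_equiv {n : A → ℕ} (φ : E ≃ Σ x, Fin (n x)) (x : A) :
    #{e | (φ e).1 = x} = n x := by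
  rw [← Fintype.card_subtype, ← Fintype.card_fin (n x)]
  exact Fintype.card_congr ((φ.subtypeEquiv fun _ ↦ Iff.rfl).trans (Equiv.sigmaSubtype x))

theorem card_fiber_sigma_fst {n : A → ℕ} [Fintype (Σ x, Fin (n x))] (x : A) :
    #{d : Σ x, Fin (n x) | d.1 = x} = n x :=
  card_fiber_fst_comp_equiv (.refl _) x

theorem card_fiber_notMem_range {ι : Type*} {a : E → A} {m : ι → E}
    [DecidablePred (· ∈ Set.range m)] (hm : Function.Bijective (a ∘ m)) (x : A) :
    #{e : {e // e ∉ Set.range m} | a e = x} = #{e | a e = x} - 1 := by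
  classical
  obtain ⟨i, rfl⟩ := hm.surjective x
  rw [← card_erase_of_mem (a := m i) (by simp), ← card_map (Function.Embedding.subtype _)]
  congr 1
  ext e
  simp only [mem_map, mem_filter_univ, Function.Embedding.subtype_apply, Subtype.exists,
    exists_and_right, exists_eq_right, mem_erase, Function.comp_apply]
  refine ⟨fun ⟨he, hx⟩ ↦ ⟨fun h ↦ he ⟨i, h.symm⟩, hx⟩, fun ⟨hne, hx⟩ ↦ ⟨?_, hx⟩⟩
  rintro ⟨j, rfl⟩
  exact hne (congrArg m (hm.injective hx))

theorem card_filter_mem_of_regular {a : E → A} {k : ℕ} (ha : ∀ x, #{e | a e = x} = k)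
    (S : Finset A) : #{e | a e ∈ S} = #S * k := by
  rw [← sum_card_fiberwise_eq_card_filter, sum_const_nat fun x _ ↦ ha x]

theorem card_eq_of_regular [Fintype A] {a : E → A} {k : ℕ} (ha : ∀ x, #{e | a e = x} = k) :
    Fintype.card E = Fintype.card A * k := by
  simpa using card_filter_mem_of_regular ha univ

theorem surjective_of_regular {a : E → A} {k : ℕ} (hk : 0 < k) (ha : ∀ x, #{e | a e = x} = k) :
    Function.Surjective a := fun x ↦ by
  obtain ⟨e, he⟩ := card_pos.1 (hk.trans_eq (ha x).symm)
  exact ⟨e, by simpa using he⟩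

theorem IsProperAt.card_fiber_le {a : E → A} {c : E → C} (hc : IsProperAt a c) {x : A}
    {S : Finset C} (hS : ∀ e, a e = x → c e ∈ S) : #{e | a e = x} ≤ #S :=
  card_le_card_of_injOn c (fun e he ↦ hS e (by simpa using he)) fun e he e' he' ↦ hc (by simp_all)

theorem exists_isProperAt_lt_card_fiber (a : E → A) :
    ∃ r : E → ℕ, IsProperAt a r ∧ ∀ e, r e < #{e' | a e' = a e} := by
  classical
  let φ : E ≃ Σ x, Fin (Fintype.card {e // a e = x}) :=
    (Equiv.sigmaFiberEquiv a).symm.trans (Equiv.sigmaCongrRight fun x ↦ Fintype.equivFin _)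
  refine ⟨fun e ↦ (φ e).2, fun e e' hend hr ↦ φ.injective (Sigma.ext hend ?_), fun e ↦ ?_⟩
  · exact (Fin.heq_ext_iff (congrArg (fun x ↦ Fintype.card {e // a e = x}) hend)).2 hr
  · rw [← Fintype.card_subtype]
    exact (φ e).2.isLt

theorem exists_pairing (a : E → A) :
    ∃ p : E → ℕ, (∀ e, p e < (#{e' | a e' = a e} + 1) / 2) ∧
      ∀ y, #{e | (a e, p e) = y} ≤ 2 := by
  obtain ⟨r, hproper, hlt⟩ := exists_isProperAt_lt_card_fiber a
  refine ⟨fun e ↦ r e / 2, fun e ↦ by have := hlt e; lia, fun y ↦ ?_⟩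
  have hparity : IsProperAt (fun e ↦ (a e, r e / 2)) (fun e ↦ r e % 2) := by
    intro e e' hpair hmod
    obtain ⟨hend, hdiv⟩ := Prod.mk.inj hpair
    exact hproper hend (Nat.ext_div_mod hdiv hmod)
  simpa using hparity.card_fiber_le (S := range 2) fun e _ ↦ mem_range.2 (Nat.mod_lt _ two_pos)

theorem IsProperAt.card_fiber_color_le [DecidableEq C] {a : E → A} {p : E → ℕ} {c : E → C}
    (hc : IsProperAt (fun e ↦ (a e, p e)) c) {n : A → ℕ} (hp : ∀ e, p e < n (a e)) (x : A) (i : C) :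
    #{e | a e = x ∧ c e = i} ≤ n x := by
  have hproper : IsProperAt (fun e ↦ (a e, c e)) p := fun e e' hend hpair ↦ by
    obtain ⟨hae, hce⟩ := Prod.mk.inj hend
    exact hc (Prod.ext hae hpair) hce
  have hmem (e : E) (he : (a e, c e) = (x, i)) : p e ∈ range (n x) := by
    obtain ⟨rfl, -⟩ := Prod.mk.inj he
    exact mem_range.2 (hp e)
  simpa only [Prod.mk.injEq, card_range] using hproper.card_fiber_le hmem

end Fibers

section Konig

variable [Fintype E] [DecidableEq A] [DecidableEq B] {a : E → A} {b : E → B}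

theorem exists_perfect_matching_of_regular {k : ℕ} (hk : 0 < k) (ha : ∀ x, #{e | a e = x} = k)
    (hb : ∀ y, #{e | b e = y} = k) :
    ∃ m : A → E, Function.Bijective (a ∘ m) ∧ Function.Bijective (b ∘ m) := by
  let N (x : A) : Finset B := image b {e | a e = x}
  have hall (S : Finset A) : #S ≤ #(S.biUnion N) := by
    refine Nat.le_of_mul_le_mul_right ?_ hk
    rw [← card_filter_mem_of_regular ha, ← card_filter_mem_of_regular hb]
    refine card_le_card fun e he ↦ ?_
    rw [mem_filter_univ] at he ⊢
    exact mem_biUnion.2 ⟨a e, he, mem_image_of_mem b (by simp)⟩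
  obtain ⟨f, hinj, hfN⟩ := (all_card_le_biUnion_card_iff_exists_injective N).1 hall
  have hedge (x : A) : ∃ e, a e = x ∧ b e = f x := by simpa [N] using hfN x
  choose m ham hbm using hedge
  have : Finite A := .of_surjective a (surjective_of_regular hk ha)
  have : Finite B := .of_surjective b (surjective_of_regular hk hb)
  have hcard : Nat.card B = Nat.card A := by
    have := Fintype.ofFinite A
    have := Fintype.ofFinite B
    simpa only [Nat.card_eq_fintype_card] using Nat.eq_of_mul_eq_mul_right hk
      ((card_eq_of_regular hb).symm.trans (card_eq_of_regular ha))
  refine ⟨m, (funext ham : a ∘ m = id) ▸ Function.bijective_id, ?_⟩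
  rw [(funext hbm : b ∘ m = f)]
  exact hinj.bijective_of_nat_card_le hcard.le

theorem exists_isProperAt_fin_of_regular {k : ℕ} (ha : ∀ x, #{e | a e = x} = k)
    (hb : ∀ y, #{e | b e = y} = k) : ∃ c : E → Fin k, IsProperAt a c ∧ IsProperAt b c := by
  classical
  induction k generalizing E with
  | zero =>
    have : IsEmpty E := ⟨fun e ↦ filter_eq_empty_iff.1 (card_eq_zero.1 (ha (a e))) (mem_univ e) rfl⟩
    exact ⟨isEmptyElim, fun e ↦ isEmptyElim e, fun e ↦ isEmptyElim e⟩
  | succ k ih =>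
    obtain ⟨m, ham, hbm⟩ := exists_perfect_matching_of_regular k.succ_pos ha hb
    obtain ⟨c, hca, hcb⟩ := ih (E := {e // e ∉ Set.range m}) (a := fun e ↦ a e) (b := fun e ↦ b e)
      (fun x ↦ by rw [card_fiber_notMem_range ham, ha, Nat.add_sub_cancel])
      (fun y ↦ by rw [card_fiber_notMem_range hbm, hb, Nat.add_sub_cancel])
    exact ⟨_, hca.dite_mem_range ham.injective, hcb.dite_mem_range hbm.injective⟩

theorem exists_isProperAt_fin_of_card_eq [Fintype A] [Fintype B] {k : ℕ}
    (hAB : Fintype.card A = Fintype.card B) (ha : ∀ x, #{e | a e = x} ≤ k)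
    (hb : ∀ y, #{e | b e = y} ≤ k) : ∃ c : E → Fin k, IsProperAt a c ∧ IsProperAt b c := by
  -- A bijection between the edges missing on the two sides completes the graph to a regular one.
  let nA (x : A) : ℕ := k - #{e | a e = x}
  let nB (y : B) : ℕ := k - #{e | b e = y}
  have hdeficit : Fintype.card (Σ x, Fin (nA x)) = Fintype.card (Σ y, Fin (nB y)) := by
    have hA := sum_tsub_distrib univ fun x _ ↦ ha x
    have hB := sum_tsub_distrib univ fun y _ ↦ hb y
    simp only [Fintype.card_sigma, Fintype.card_fin, nA, nB, hA, hB, sum_const, card_univ, hAB,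
      sum_card_fiberwise_eq_card_filter, mem_univ, filter_true]
  let φ := Fintype.equivOfCardEq hdeficit
  obtain ⟨c, hca, hcb⟩ := exists_isProperAt_fin_of_regular
    (a := Sum.elim a Sigma.fst) (b := Sum.elim b (Sigma.fst ∘ φ)) (k := k)
    (fun x ↦ by
      rw [card_fiber_sumElim, card_fiber_sigma_fst, Nat.add_sub_cancel' (ha x)])
    (fun y ↦ by
      rw [card_fiber_sumElim, Function.comp_def, card_fiber_fst_comp_equiv φ,
        Nat.add_sub_cancel' (hb y)])
  exact ⟨c ∘ .inl, fun e e' hend hcol ↦ Sum.inl_injective (hca hend hcol),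
    fun e e' hend hcol ↦ Sum.inl_injective (hcb hend hcol)⟩

theorem exists_isProperAt_of_card_fiber_le [Fintype C] (ha : ∀ x, #{e | a e = x} ≤ Fintype.card C)
    (hb : ∀ y, #{e | b e = y} ≤ Fintype.card C) :
    ∃ c : E → C, IsProperAt a c ∧ IsProperAt b c := by
  classical
  -- Both sides become the union of the two vertex sets, so that they have the same size.
  let a' (e : E) : Set.range a ⊕ Set.range b := .inl ⟨a e, e, rfl⟩
  let b' (e : E) : Set.range a ⊕ Set.range b := .inr ⟨b e, e, rfl⟩
  obtain ⟨c, hca, hcb⟩ := exists_isProperAt_fin_of_card_eq (k := Fintype.card C)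
    (a := a') (b := b') rfl
    (by rintro (x | y) <;> simp [a', Subtype.ext_iff, ha])
    (by rintro (x | y) <;> simp [b', Subtype.ext_iff, hb])
  let φ := (Fintype.equivFin C).symm
  exact ⟨φ ∘ c, fun e e' hend hcol ↦ hca (by simp [a', hend]) (φ.injective hcol),
    fun e e' hend hcol ↦ hcb (by simp [b', hend]) (φ.injective hcol)⟩

theorem exists_halving (a : E → A) (b : E → B) :
    ∃ o : E → Bool, (∀ x i, #{e | a e = x ∧ o e = i} ≤ (#{e | a e = x} + 1) / 2) ∧
      ∀ y i, #{e | b e = y ∧ o e = i} ≤ (#{e | b e = y} + 1) / 2 := by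
  obtain ⟨p, hp, hpair_a⟩ := exists_pairing a
  obtain ⟨q, hq, hpair_b⟩ := exists_pairing b
  obtain ⟨o, hoa, hob⟩ := exists_isProperAt_of_card_fiber_le (C := Bool) hpair_a hpair_b
  exact ⟨o, hoa.card_fiber_color_le (n := fun x ↦ (#{e | a e = x} + 1) / 2) hp,
    hob.card_fiber_color_le (n := fun y ↦ (#{e | b e = y} + 1) / 2) hq⟩

theorem exists_isProperAt_and_colorSets {W : Type*} [Finite W] [Fintype C] [DecidableEq W]
    {tail head : E → W} {n : W → ℕ} (hn : ∀ w, n w ≤ Fintype.card C)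
    (htail : ∀ w, #{e | tail e = w} ≤ n w) (hhead : ∀ w, #{e | head e = w} ≤ n w) :
    ∃ (c : E → C) (T : W → Finset C), IsProperAt tail c ∧ IsProperAt head c ∧
      (∀ w, #(T w) = n w) ∧ ∀ e, c e ∈ T (tail e) ∧ c e ∈ T (head e) := by
  classical
  have := Fintype.ofFinite W
  let Loop : Type _ := Σ w, Fin (Fintype.card C - n w)
  obtain ⟨c, hct, hch⟩ := exists_isProperAt_of_card_fiber_le (C := C)
    (a := Sum.elim tail (Sigma.fst : Loop → W)) (b := Sum.elim head (Sigma.fst : Loop → W))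
    (fun w ↦ by
      grw [card_fiber_sumElim, card_fiber_sigma_fst, htail, Nat.add_sub_cancel' (hn w)])
    (fun w ↦ by
      grw [card_fiber_sumElim, card_fiber_sigma_fst, hhead, Nat.add_sub_cancel' (hn w)])
  let loopColors (w : W) : Finset C := univ.image fun i ↦ c (.inr ⟨w, i⟩)
  have hloops (w : W) : #(loopColors w) = Fintype.card C - n w := by
    rw [card_image_of_injective, card_univ, Fintype.card_fin]
    intro i j hij
    simpa using @hct (.inr ⟨w, i⟩) (.inr ⟨w, j⟩) rfl hij
  refine ⟨c ∘ .inl, fun w ↦ (loopColors w)ᶜ, fun e e' hend hcol ↦ Sum.inl_injective (hct hend hcol),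
    fun e e' hend hcol ↦ Sum.inl_injective (hch hend hcol), fun w ↦ ?_, fun e ↦ ⟨?_, ?_⟩⟩
  · rw [card_compl, hloops, Nat.sub_sub_self (hn w)]
  · simp only [loopColors, mem_compl, mem_image, mem_univ, true_and, not_exists]
    exact fun i hi ↦ Sum.inr_ne_inl (hct rfl hi)
  · simp only [loopColors, mem_compl, mem_image, mem_univ, true_and, not_exists]
    exact fun i hi ↦ Sum.inr_ne_inl (hch rfl hi)

end Konig

end EdgeColoring

section BipartiteGraph

variable {V : Type*} {G : SimpleGraph V}

theorem exists_endpoint_of_color (col : G.Coloring Bool) :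
    ∃ p : Bool → G.edgeSet → V, ∀ i e v, p i e = v ↔ v ∈ e.1 ∧ col v = i := by
  have hedge (i : Bool) (e : G.edgeSet) : ∃ w, ∀ v, w = v ↔ v ∈ e.1 ∧ col v = i := by
    obtain ⟨⟨x, y⟩, hxy⟩ := e
    have hne : col x ≠ col y := col.valid hxy
    by_cases hx : col x = i
    · exact ⟨x, by grind⟩
    · have hy : col y = i :=
        Bool.not_inj ((Bool.eq_not.2 hne).symm.trans (Bool.eq_not.2 hx))
      exact ⟨y, by grind⟩
  choose p hp using hedge
  exact ⟨p, hp⟩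

theorem isProperEdgeColoring_extend {c : G.edgeSet → ℕ}
    (hc : ∀ v, Set.InjOn c {e | v ∈ e.1}) :
    IsProperEdgeColoring G (Function.extend Subtype.val c 0) := by
  rintro e he e' he' hne ⟨v, hv, hv'⟩ hcol
  lift e to G.edgeSet using he
  lift e' to G.edgeSet using he'
  simp only [Subtype.val_injective.extend_apply] at hcol
  exact hne (congrArg Subtype.val (hc v hv hv' hcol))

theorem palette_extend (c : G.edgeSet → ℕ) (v : V) :
    palette G (Function.extend Subtype.val c 0) v = c '' {e | v ∈ e.1} := by
  ext n
  constructor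
  · rintro ⟨e, he, hv, rfl⟩
    lift e to G.edgeSet using he
    exact ⟨e, hv, (Subtype.val_injective.extend_apply ..).symm⟩
  · rintro ⟨e, hv, rfl⟩
    exact ⟨e, e.2, hv, Subtype.val_injective.extend_apply ..⟩

variable [Fintype V] [DecidableRel G.Adj]

theorem card_filter_mem_edge [DecidableEq V] (v : V) : #{e : G.edgeSet | v ∈ e.1} = G.degree v := by
  rw [← G.card_incidenceFinset_eq_degree, ← card_map (Function.Embedding.subtype _)]
  congr 1
  ext e
  simp [incidenceSet, and_comm]

theorem exists_balanced_orientation [DecidableEq V] (col : G.Coloring Bool) :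
    ∃ tail head : G.edgeSet → V, (∀ e, e.1 = s(tail e, head e)) ∧
      (∀ v, #{e | tail e = v} ≤ (G.degree v + 1) / 2) ∧
      ∀ v, #{e | head e = v} ≤ (G.degree v + 1) / 2 := by
  obtain ⟨p, hp⟩ := exists_endpoint_of_color col
  obtain ⟨o, hfalse, htrue⟩ := exists_halving (p false) (p true)
  have hcol {i : Bool} {e : G.edgeSet} {v : V} (h : p i e = v) : col v = i := ((hp i e v).1 h).2
  have hdeg (v : V) : #{e | p (col v) e = v} = G.degree v := by
    simp [hp, card_filter_mem_edge]
  have hhalf (v : V) (j : Bool) : #{e | p (col v) e = v ∧ o e = j} ≤ (G.degree v + 1) / 2 := by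
    rw [← hdeg]
    cases col v
    exacts [hfalse v j, htrue v j]
  refine ⟨fun e ↦ p (o e) e, fun e ↦ p (!o e) e, fun e ↦ Sym2.ext fun v ↦ by grind,
    fun v ↦ le_trans (card_le_card fun e he ↦ ?_) (hhalf v (col v)),
    fun v ↦ le_trans (card_le_card fun e he ↦ ?_) (hhalf v !col v)⟩ <;>
  · rw [mem_filter_univ] at he ⊢
    simpa [hcol he] using he

theorem exists_edgeColoring_and_colorSets {C : Type*} [Fintype C] (col : G.Coloring Bool)
    (hC : ∀ v, (G.degree v + 1) / 2 ≤ Fintype.card C) :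
    ∃ (c : G.edgeSet → Bool × C) (T : V → Finset C), (∀ v, Set.InjOn c {e | v ∈ e.1}) ∧
      (∀ v, #(T v) = (G.degree v + 1) / 2) ∧ ∀ v e, v ∈ e.1 → (c e).2 ∈ T v := by
  classical
  obtain ⟨tail, head, hends, htail, hhead⟩ := exists_balanced_orientation col
  obtain ⟨g, T, hgt, hgh, hcard, hmem⟩ := exists_isProperAt_and_colorSets hC htail hhead
  have hcol (e : G.edgeSet) : col (tail e) ≠ col (head e) :=
    col.valid (by simpa [hends e] using e.2)
  have hinc {v : V} {e : G.edgeSet} : v ∈ e.1 ↔ v = tail e ∨ v = head e := by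
    rw [hends, Sym2.mem_iff]
  refine ⟨fun e ↦ (col (tail e), g e), T, fun v e he e' he' heq ↦ ?_, hcard, fun v e he ↦ ?_⟩
  · obtain ⟨hbit, hg⟩ := Prod.mk.inj heq
    rcases hinc.1 he with rfl | rfl <;> rcases hinc.1 he' with h | h
    · exact hgt h hg
    · exact absurd (hbit.symm.trans (congrArg col h)) (hcol e')
    · exact absurd (hbit.trans (congrArg col h.symm)) (hcol e)
    · exact hgh h hg
  · rcases hinc.1 he with rfl | rfl
    exacts [(hmem e).1, (hmem e).2]

theorem paletteIndex_le_sum_card [DecidableEq V] {C : Type*} [Countable C] [DecidableEq C]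
    {c : G.edgeSet → C} (hc : ∀ v, Set.InjOn c {e | v ∈ e.1}) {S : ℕ → Finset (Finset C)}
    (hS : ∀ v, image c {e | v ∈ e.1} ∈ S (G.degree v)) :
    paletteIndex G ≤ ∑ d ∈ univ.image fun v ↦ G.degree v, #(S d) := by
  classical
  obtain ⟨ι, hι⟩ := exists_injective_nat C
  let D := univ.image fun v ↦ G.degree v
  let toPalette (P : Finset C) : Set ℕ := ι '' P
  have hsub : Set.range (palette G (Function.extend Subtype.val (ι ∘ c) 0)) ⊆
      ((D.biUnion S).image toPalette : Finset (Set ℕ)) := by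
    rintro _ ⟨v, rfl⟩
    refine mem_coe.2 (mem_image.2 ⟨_, mem_biUnion.2 ⟨_, by simp [D], hS v⟩, ?_⟩)
    rw [palette_extend, Set.image_comp]
    simp [toPalette]
  calc paletteIndex G
      ≤ (Set.range (palette G (Function.extend Subtype.val (ι ∘ c) 0))).ncard :=
        Nat.sInf_le ⟨_, isProperEdgeColoring_extend fun v ↦ hι.comp_injOn (hc v), rfl⟩
    _ ≤ #((D.biUnion S).image toPalette) :=
        (Set.ncard_le_ncard hsub (finite_toSet _)).trans_eq (Set.ncard_coe_finset _)
    _ ≤ ∑ d ∈ D, #(S d) := card_image_le.trans card_biUnion_le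

end BipartiteGraph

section PairedPalettes

variable (C : Type*) [Fintype C] [DecidableEq C]

/-- The candidate palettes of a vertex of degree `d`. The elements `(false, i)` and `(true, i)` of
`Bool × C` are the two colors of the pair `i : C`, and the `d` colors of a palette come from only
`⌈d / 2⌉` pairs. -/
def pairedPalettes (d : ℕ) : Finset (Finset (Bool × C)) :=
  (powersetCard ((d + 1) / 2) univ).biUnion fun T ↦ powersetCard d (univ ×ˢ T)

theorem card_pairedPalettes_le (d : ℕ) :
    #(pairedPalettes C d) ≤
      (Fintype.card C).choose ((d + 1) / 2) * (2 * ((d + 1) / 2)).choose d := by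
  rw [← card_univ, ← card_powersetCard]
  refine card_biUnion_le_card_mul _ _ _ fun T hT ↦ ?_
  simp [(mem_powersetCard.1 hT).2]

theorem card_pairedPalettes_le_of_odd {d : ℕ} (hd : Odd d) :
    #(pairedPalettes C d) ≤ (Fintype.card C).choose ((d + 1) / 2) * (d + 1) := by
  simpa [Nat.two_mul_div_two_of_even hd.add_one] using card_pairedPalettes_le C d

theorem card_pairedPalettes_le_of_even {d : ℕ} (hd : Even d) :
    #(pairedPalettes C d) ≤ (Fintype.card C).choose (d / 2) := by
  have hhalf : (d + 1) / 2 = d / 2 := Nat.succ_div_of_not_dvd (by grind)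
  simpa [hhalf, Nat.two_mul_div_two_of_even hd] using card_pairedPalettes_le C d

variable {C}

theorem mem_pairedPalettes {P : Finset (Bool × C)} {T : Finset C} (hT : #T = (#P + 1) / 2)
    (hP : ∀ x ∈ P, x.2 ∈ T) : P ∈ pairedPalettes C #P :=
  mem_biUnion.2 ⟨T, mem_powersetCard.2 ⟨subset_univ T, hT⟩,
    mem_powersetCard.2 ⟨fun x hx ↦ mem_product.2 ⟨mem_univ _, hP x hx⟩, rfl⟩⟩

end PairedPalettes

/-- If `G` is a bipartite graph (no isolated vertices), then
`š(G) ≤ ∑_{d ∈ D^odd(G)} C(⌈Δ(G)/2⌉, (d+1)/2)·(d+1) + ∑_{d ∈ D^even(G)} C(⌈Δ(G)/2⌉, d/2)`. -/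
theorem palette_index_bipartite {V : Type*} [Fintype V] [DecidableEq V]
    (G : SimpleGraph V) [DecidableRel G.Adj]
    (hbip : G.Colorable 2)
    (hiso : ∀ v : V, 0 < G.degree v) :
    paletteIndex G ≤
      ∑ d ∈ (Finset.univ.image (fun v => G.degree v)).filter (fun d => Odd d),
          Nat.choose ((G.maxDegree + 1) / 2) ((d + 1) / 2) * (d + 1)
      + ∑ d ∈ (Finset.univ.image (fun v => G.degree v)).filter (fun d => Even d),
          Nat.choose ((G.maxDegree + 1) / 2) (d / 2) := by
  obtain ⟨c, T, hproper, hcard, hmem⟩ := exists_edgeColoring_and_colorSets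
    (C := Fin ((G.maxDegree + 1) / 2)) (hbip.toColoring (by simp)) fun v ↦ by
      grw [Fintype.card_fin, G.degree_le_maxDegree v]
  have hpalette (v : V) : image c {e | v ∈ e.1} ∈ pairedPalettes _ (G.degree v) := by
    have hdeg : #(image c {e | v ∈ e.1}) = G.degree v := by
      rw [card_image_of_injOn (by simpa using hproper v), card_filter_mem_edge]
    rw [← hdeg]
    exact mem_pairedPalettes (hdeg ▸ hcard v)
      (forall_mem_image.2 fun e he ↦ hmem v e (mem_filter_univ e |>.1 he))
  grw [paletteIndex_le_sum_card hproper hpalette, ← sum_filter_add_sum_filter_not _ Odd]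
  simp only [Nat.not_odd_iff_even]
  gcongr with d hd d hd
  · simpa using card_pairedPalettes_le_of_odd (Fin _) (mem_filter.1 hd).2
  · simpa using card_pairedPalettes_le_of_even (Fin _) (mem_filter.1 hd).2
end

section
/- If G is a finite simple graph with no isolated vertices satisfying Δ(G) − δ(G) ≤ 2, where Δ(G) and δ(G) are the maximum and minimum degree of G, then š(G) ≤ Δ(G)² + Δ(G) + 1. -/
open SimpleGraph Finset

/-!
Let `Δ` be the maximum degree. Take a maximal matching among the vertices of degree `Δ`, give its
edges one extra color, and delete it. The vertices still of degree `Δ` are then independent, so by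
Fournier's theorem the rest has a proper edge coloring with `Δ` colors. Only vertices of degree `Δ`
see the extra color: their palettes are `Δ`-subsets of `Δ + 1` colors, while a vertex of degree
`d < Δ` has one of the `Δ.choose d` palettes of size `d` in the first `Δ` colors.

Fournier's theorem is proved by deleting a vertex `v` all of whose neighbors have degree less than
the number of colors. In a coloring of what remains each neighbor misses at least two colors, and
`v` can be put back as soon as the neighbors have distinct missing colors. To arrange this, list two
missing colors at each neighbor but only one at a chosen one. As long as no color is listed exactly
once, parity gives a color listed at least three times and another listed nowhere, and a Kempe swap
increases the number of listed colors; a color listed exactly once is assigned to the vertex listing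
it, and its color class is removed.
-/

section Degree

variable {V : Type*} {G H : SimpleGraph V}

theorem degree_lt_degree_of_le {v w : V} [Fintype (G.neighborSet v)] [Fintype (H.neighborSet v)]
    (hle : H ≤ G) (hG : G.Adj v w) (hH : ¬H.Adj v w) : H.degree v < G.degree v := by
  simp_rw [← card_neighborSet_eq_degree]
  exact Set.card_lt_card ((Set.ssubset_iff_of_subset fun u hu ↦ hle hu).mpr ⟨w, hG, hH⟩)

theorem card_degree_le_one_le_two_of_connected [Fintype V] [DecidableRel H.Adj]
    (hconn : H.Connected) (hdeg : ∀ v, H.degree v ≤ 2) : #{v | H.degree v ≤ 1} ≤ 2 := by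
  classical
  have hedges : Fintype.card V ≤ #H.edgeFinset + 1 := by
    simpa [edgeFinset_card] using hconn.card_vert_le_card_edgeSet_add_one
  have hsum : ∑ v, (H.degree v + if H.degree v ≤ 1 then 1 else 0) ≤ ∑ _v : V, 2 :=
    sum_le_sum fun v _ ↦ by have := hdeg v; split_ifs <;> omega
  rw [sum_add_distrib, sum_degrees_eq_twice_card_edges, ← card_filter, sum_const, card_univ,
    smul_eq_mul] at hsum
  omega

theorem card_le_two_of_mem_supp_of_degree_le_one [Fintype V] [DecidableRel H.Adj]
    (hdeg : ∀ v, H.degree v ≤ 2) (C : H.ConnectedComponent) {T : Finset V}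
    (hTC : ∀ v ∈ T, v ∈ C.supp) (hT : ∀ v ∈ T, H.degree v ≤ 1) : #T ≤ 2 := by
  classical
  have hdegC (v : C.supp) : (H.induce C.supp).degree v = H.degree v :=
    degree_induce_of_neighborSet_subset fun _ hw ↦ C.mem_supp_of_adj_mem_supp v.2 hw
  calc #T ≤ #(({v | (H.induce C.supp).degree v ≤ 1} : Finset C.supp).image Subtype.val) :=
        card_le_card fun v hv ↦ mem_image.mpr
          ⟨⟨v, hTC v hv⟩, by simpa only [mem_filter_univ, hdegC] using hT v hv, rfl⟩
    _ ≤ #{v | (H.induce C.supp).degree v ≤ 1} := card_image_le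
    _ ≤ 2 := card_degree_le_one_le_two_of_connected C.connected_toSimpleGraph
        fun v ↦ hdegC v ▸ hdeg v

end Degree

section Palette

variable {V : Type*} {G H : SimpleGraph V} {c : Sym2 V → ℕ} {v : V}

theorem palette_eq_image (G : SimpleGraph V) (c : Sym2 V → ℕ) (v : V) :
    palette G c v = (fun w ↦ c s(v, w)) '' G.neighborSet v := by
  ext m
  constructor
  · rintro ⟨_, hadj, ⟨w, rfl⟩, rfl⟩
    exact ⟨w, hadj, rfl⟩
  · rintro ⟨w, hadj, rfl⟩
    exact ⟨s(v, w), hadj, Sym2.mem_mk_left v w, rfl⟩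

theorem mem_palette_iff {m : ℕ} : m ∈ palette G c v ↔ ∃ w, G.Adj v w ∧ c s(v, w) = m := by
  simp [palette_eq_image]

theorem color_mem_palette {w : V} (h : G.Adj v w) : c s(v, w) ∈ palette G c v :=
  mem_palette_iff.mpr ⟨w, h, rfl⟩

theorem isProperEdgeColoring_iff_injOn :
    IsProperEdgeColoring G c ↔ ∀ v, Set.InjOn (fun w ↦ c s(v, w)) (G.neighborSet v) := by
  constructor
  · intro hc v x hx y hy hxy
    by_contra hne
    exact hc _ hx _ hy (fun h ↦ hne (Sym2.congr_right.mp h))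
      ⟨v, Sym2.mem_mk_left v x, Sym2.mem_mk_left v y⟩ hxy
  · rintro hc _ hx _ hy hne ⟨v, ⟨x, rfl⟩, ⟨y, rfl⟩⟩ hxy
    exact hne (Sym2.congr_right.mpr (hc v hx hy hxy))

theorem IsProperEdgeColoring.mono (hc : IsProperEdgeColoring G c) (hle : H ≤ G) :
    IsProperEdgeColoring H c :=
  isProperEdgeColoring_iff_injOn.mpr fun v ↦
    (isProperEdgeColoring_iff_injOn.mp hc v).mono fun _ hw ↦ hle hw

theorem ncard_neighborSet_eq_degree [Fintype (G.neighborSet v)] :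
    (G.neighborSet v).ncard = G.degree v := by
  rw [Set.ncard_eq_toFinset_card', Set.toFinset_card, card_neighborSet_eq_degree]

theorem ncard_palette_le_degree [Fintype (G.neighborSet v)] :
    (palette G c v).ncard ≤ G.degree v := by
  rw [palette_eq_image, ← ncard_neighborSet_eq_degree]
  exact Set.ncard_image_le (Set.toFinite _)

theorem IsProperEdgeColoring.ncard_palette [Fintype (G.neighborSet v)]
    (hc : IsProperEdgeColoring G c) : (palette G c v).ncard = G.degree v := by
  rw [palette_eq_image, (isProperEdgeColoring_iff_injOn.mp hc v).ncard_image,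
    ncard_neighborSet_eq_degree]

theorem palette_deleteEdges_preimage (s : Set ℕ) :
    palette (G.deleteEdges (c ⁻¹' s)) c v = palette G c v \ s := by
  ext m
  simp only [mem_palette_iff, deleteEdges_adj, Set.mem_preimage, Set.mem_sdiff]
  grind

/-- `c` is a proper edge coloring of `G` all of whose colors lie in `K`. The values of `c` off the
edges of `G` are irrelevant, so the latter is expressed through the palettes. -/
structure IsProperEdgeColoringIn (G : SimpleGraph V) (c : Sym2 V → ℕ) (K : Finset ℕ) : Prop where
  proper : IsProperEdgeColoring G c
  palette_subset (v : V) : palette G c v ⊆ K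

theorem IsProperEdgeColoringIn.color_mem {K : Finset ℕ} (hc : IsProperEdgeColoringIn G c K)
    {u w : V} (h : G.Adj u w) : c s(u, w) ∈ K :=
  hc.palette_subset u (color_mem_palette h)

open Classical in
/-- The colors of `K` that do not occur at `v`. -/
noncomputable def missingColors (G : SimpleGraph V) (c : Sym2 V → ℕ) (K : Finset ℕ) (v : V) :
    Finset ℕ :=
  {m ∈ K | m ∉ palette G c v}

variable {K : Finset ℕ}

theorem mem_missingColors {m : ℕ} : m ∈ missingColors G c K v ↔ m ∈ K ∧ m ∉ palette G c v := by
  simp [missingColors]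

theorem card_le_card_missingColors_add_degree [Fintype (G.neighborSet v)] :
    #K ≤ #(missingColors G c K v) + G.degree v := by
  classical
  have hused : #{m ∈ K | m ∈ palette G c v} ≤ G.degree v := by
    refine le_trans ?_ (ncard_palette_le_degree (c := c))
    rw [← Set.ncard_coe_finset]
    refine Set.ncard_le_ncard (fun m hm ↦ (mem_filter.mp hm).2) ?_
    rw [palette_eq_image]
    exact Set.toFinite _
  have hsplit := card_filter_add_card_filter_not (s := K) (· ∈ palette G c v)
  unfold missingColors
  omega

end Palette

section Kempe

variable {V : Type*} {G : SimpleGraph V} {c : Sym2 V → ℕ} {K : Finset ℕ} {i j : ℕ} {u v : V}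

/-- The subgraph of `G` formed by the edges colored `i` or `j`. Its connected components are the
Kempe chains of `c`. -/
def kempeGraph (G : SimpleGraph V) (c : Sym2 V → ℕ) (i j : ℕ) : SimpleGraph V :=
  G.deleteEdges (c ⁻¹' {i, j}ᶜ)

theorem kempeGraph_adj :
    (kempeGraph G c i j).Adj u v ↔ G.Adj u v ∧ (c s(u, v) = i ∨ c s(u, v) = j) := by
  simp [kempeGraph, or_iff_not_imp_left]

theorem palette_kempeGraph_subset : palette (kempeGraph G c i j) c v ⊆ {i, j} := by
  rw [kempeGraph, palette_deleteEdges_preimage, Set.sdiff_compl]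
  exact Set.inter_subset_right

-- A Kempe chain is a path or a cycle, and a vertex missing `i` can only be an end of it.
theorem IsProperEdgeColoring.card_le_two_of_mem_supp_of_notMem_palette [Finite V]
    (hc : IsProperEdgeColoring G c) (C : (kempeGraph G c i j).ConnectedComponent) {T : Finset V}
    (hTC : ∀ v ∈ T, v ∈ C.supp) (hT : ∀ v ∈ T, i ∉ palette G c v) : #T ≤ 2 := by
  classical
  have := Fintype.ofFinite V
  have hproper : IsProperEdgeColoring (kempeGraph G c i j) c := hc.mono (deleteEdges_le _)
  refine card_le_two_of_mem_supp_of_degree_le_one (fun v ↦ ?_) C hTC fun v hv ↦ ?_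
  · rw [← hproper.ncard_palette]
    exact (Set.ncard_le_ncard palette_kempeGraph_subset).trans (Set.ncard_insert_le i {j} |>.trans
      (by simp))
  · have hsub : palette (kempeGraph G c i j) c v ⊆ {j} := by
      intro m hm
      refine (palette_kempeGraph_subset hm).resolve_left ?_
      rintro rfl
      rw [kempeGraph, palette_deleteEdges_preimage] at hm
      exact hT v hv hm.1
    rw [← hproper.ncard_palette]
    exact (Set.ncard_le_ncard hsub).trans (Set.ncard_singleton j).le

open Classical in
/-- The permutation of the colors seen at `v` when `i` and `j` are swapped along the Kempe
chain `C`. -/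
noncomputable def kempePerm (C : (kempeGraph G c i j).ConnectedComponent) (v : V) :
    Equiv.Perm ℕ :=
  if v ∈ C.supp then Equiv.swap i j else 1

open Classical in
/-- The edge coloring obtained from `c` by swapping the colors `i` and `j` along the Kempe
chain `C`. Swapping on all edges that meet `C` is the same, as those outside the chain are colored
neither `i` nor `j`. -/
noncomputable def kempeSwap (C : (kempeGraph G c i j).ConnectedComponent) : Sym2 V → ℕ :=
  fun e ↦ if ∃ v ∈ e, v ∈ C.supp then Equiv.swap i j (c e) else c e

variable {C : (kempeGraph G c i j).ConnectedComponent}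

theorem kempePerm_of_mem (hv : v ∈ C.supp) : kempePerm C v = Equiv.swap i j := if_pos hv

theorem kempePerm_of_notMem (hv : v ∉ C.supp) : kempePerm C v = 1 := if_neg hv

theorem kempePerm_apply_of_ne_of_ne {m : ℕ} (hi : m ≠ i) (hj : m ≠ j) :
    kempePerm C v m = m := by
  unfold kempePerm
  split_ifs
  · exact Equiv.swap_apply_of_ne_of_ne hi hj
  · rfl

theorem kempePerm_apply_mem {m : ℕ} (hi : i ∈ K) (hj : j ∈ K) (hm : m ∈ K) :
    kempePerm C v m ∈ K := by
  unfold kempePerm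
  split_ifs
  · rw [Equiv.swap_apply_def]
    split_ifs <;> assumption
  · exact hm

theorem kempeSwap_apply (h : G.Adj u v) : kempeSwap C s(u, v) = kempePerm C u (c s(u, v)) := by
  by_cases hij : c s(u, v) = i ∨ c s(u, v) = j
  · have hsupp : u ∈ C.supp ↔ v ∈ C.supp := C.mem_supp_congr_adj (kempeGraph_adj.mpr ⟨h, hij⟩)
    have hmeet : (∃ x ∈ s(u, v), x ∈ C.supp) ↔ u ∈ C.supp := by
      simp only [Sym2.mem_iff, exists_eq_or_imp, exists_eq_left, ← hsupp, or_self]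
    by_cases hu : u ∈ C.supp
    · rw [kempePerm_of_mem hu, kempeSwap, if_pos (hmeet.mpr hu)]
    · rw [kempePerm_of_notMem hu, kempeSwap, if_neg (mt hmeet.mp hu), Equiv.Perm.one_apply]
  · push Not at hij
    rw [kempePerm_apply_of_ne_of_ne hij.1 hij.2, kempeSwap,
      Equiv.swap_apply_of_ne_of_ne hij.1 hij.2, ite_self]

theorem palette_kempeSwap : palette G (kempeSwap C) v = kempePerm C v '' palette G c v := by
  simp only [palette_eq_image, Set.image_image]
  exact Set.image_congr fun w hw ↦ kempeSwap_apply hw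

theorem IsProperEdgeColoringIn.kempeSwap (hc : IsProperEdgeColoringIn G c K) (hi : i ∈ K)
    (hj : j ∈ K) (C : (kempeGraph G c i j).ConnectedComponent) :
    IsProperEdgeColoringIn G (kempeSwap C) K where
  proper := isProperEdgeColoring_iff_injOn.mpr fun v x hx y hy hxy ↦ by
    simp only [kempeSwap_apply hx, kempeSwap_apply hy, EmbeddingLike.apply_eq_iff_eq] at hxy
    exact isProperEdgeColoring_iff_injOn.mp hc.proper v hx hy hxy
  palette_subset v := by
    rw [palette_kempeSwap, Set.image_subset_iff]
    exact fun m hm ↦ kempePerm_apply_mem hi hj (hc.palette_subset v hm)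

theorem image_kempePerm_subset_missingColors {B : Finset ℕ} (hi : i ∈ K) (hj : j ∈ K)
    (hB : B ⊆ missingColors G c K v) :
    B.image (kempePerm C v) ⊆ missingColors G (kempeSwap C) K v := by
  refine image_subset_iff.mpr fun m hm ↦ ?_
  obtain ⟨hmK, hmp⟩ := mem_missingColors.mp (hB hm)
  rw [mem_missingColors, palette_kempeSwap, (kempePerm C v).injective.mem_set_image]
  exact ⟨kempePerm_apply_mem hi hj hmK, hmp⟩

end Kempe

section MissingLists

variable {V : Type*} {G : SimpleGraph V} {c : Sym2 V → ℕ} {K : Finset ℕ} {N : Finset V} {s : V}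
  {A : V → Finset ℕ}

theorem exists_eq_one_or_exists_three_le_and_exists_eq_zero {ι : Type*} {K : Finset ι} {x : ι → ℕ}
    (hodd : Odd (∑ m ∈ K, x m)) (hlt : ∑ m ∈ K, x m < 2 * #K) :
    (∃ m ∈ K, x m = 1) ∨ (∃ i ∈ K, 3 ≤ x i) ∧ ∃ j ∈ K, x j = 0 := by
  refine or_iff_not_imp_left.mpr fun hone ↦ ⟨?_, ?_⟩ <;> by_contra! hcon <;> push Not at hone
  · refine Nat.not_even_iff_odd.mpr hodd (even_sum x fun m hm ↦ ?_)
    have := hone m hm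
    have := hcon m hm
    interval_cases x m <;> first | contradiction | decide
  · refine hlt.not_ge ?_
    rw [mul_comm, ← smul_eq_mul, ← sum_const]
    exact sum_le_sum fun m hm ↦ (Nat.two_le_iff _).mpr ⟨hcon m hm, hone m hm⟩

/-- `A` lists, at every vertex of `N`, exactly two colors of `K` missing there, except for one
color only at `s`. The exact sizes make the total length of the lists odd. -/
structure IsTightMissingList (G : SimpleGraph V) (c : Sym2 V → ℕ) (K : Finset ℕ) (N : Finset V)
    (s : V) (A : V → Finset ℕ) : Prop where
  subset_missingColors : ∀ u ∈ N, A u ⊆ missingColors G c K u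
  card_eq : ∀ u ∈ N, (u = s → #(A u) = 1) ∧ (u ≠ s → #(A u) = 2)

theorem exists_isTightMissingList (hone : ∀ u ∈ N, 1 ≤ #(missingColors G c K u))
    (htwo : ∀ u ∈ N, u ≠ s → 2 ≤ #(missingColors G c K u)) :
    ∃ A, IsTightMissingList G c K N s A := by
  have hsub : ∀ u ∈ N, ∃ B ⊆ missingColors G c K u, (u = s → #B = 1) ∧ (u ≠ s → #B = 2) := by
    intro u hu
    by_cases hus : u = s
    · obtain ⟨B, hB, hcard⟩ := exists_subset_card_eq (hone u hu)
      exact ⟨B, hB, fun _ ↦ hcard, fun h ↦ absurd hus h⟩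
    · obtain ⟨B, hB, hcard⟩ := exists_subset_card_eq (htwo u hu hus)
      exact ⟨B, hB, fun h ↦ absurd h hus, fun _ ↦ hcard⟩
  choose! A hA hcard using hsub
  exact ⟨A, hA, hcard⟩

namespace IsTightMissingList

theorem one_le_card (hA : IsTightMissingList G c K N s A) {u : V} (hu : u ∈ N) : 1 ≤ #(A u) := by
  by_cases hus : u = s
  · exact ((hA.card_eq u hu).1 hus).ge
  · exact one_le_two.trans ((hA.card_eq u hu).2 hus).ge

theorem subset (hA : IsTightMissingList G c K N s A) {u : V} (hu : u ∈ N) : A u ⊆ K :=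
  fun _ hm ↦ (mem_missingColors.mp (hA.subset_missingColors u hu hm)).1

theorem biUnion_subset (hA : IsTightMissingList G c K N s A) : N.biUnion A ⊆ K :=
  Finset.biUnion_subset.mpr fun _ hu ↦ hA.subset hu

theorem sum_card_add_one (hA : IsTightMissingList G c K N s A) (hs : s ∈ N) :
    ∑ u ∈ N, #(A u) + 1 = 2 * #N := by
  classical
  have hothers : ∑ u ∈ N.erase s, #(A u) = #(N.erase s) * 2 :=
    sum_const_nat fun u hu ↦ (hA.card_eq u (mem_of_mem_erase hu)).2 (ne_of_mem_erase hu)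
  rw [← add_sum_erase N _ hs, hothers, (hA.card_eq s hs).1 rfl, ← card_erase_add_one hs]
  ring

theorem sum_card_filter_mem (hA : IsTightMissingList G c K N s A) :
    ∑ m ∈ K, #{u ∈ N | m ∈ A u} = ∑ u ∈ N, #(A u) := by
  have hcount := sum_card_bipartiteAbove_eq_sum_card_bipartiteBelow (s := K) (t := N)
    (fun m u ↦ m ∈ A u)
  refine hcount.trans (sum_congr rfl fun u hu ↦ ?_)
  rw [bipartiteBelow, filter_mem_eq_inter, inter_eq_right.mpr (hA.subset hu)]

theorem exists_card_eq_one_or_exists_three_le_card_and_exists_card_eq_zero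
    (hA : IsTightMissingList G c K N s A) (hs : s ∈ N) (hN : #N ≤ #K) :
    (∃ m ∈ K, #{u ∈ N | m ∈ A u} = 1) ∨
      (∃ i ∈ K, 3 ≤ #{u ∈ N | i ∈ A u}) ∧ ∃ j ∈ K, #{u ∈ N | j ∈ A u} = 0 := by
  have hsum := hA.sum_card_add_one hs
  rw [← hA.sum_card_filter_mem] at hsum
  refine exists_eq_one_or_exists_three_le_and_exists_eq_zero ?_ (by omega)
  rw [Nat.odd_iff]
  omega

theorem image_kempePerm (hA : IsTightMissingList G c K N s A) {i j : ℕ} (hi : i ∈ K) (hj : j ∈ K)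
    (C : (kempeGraph G c i j).ConnectedComponent) :
    IsTightMissingList G (kempeSwap C) K N s fun u ↦ (A u).image (kempePerm C u) where
  subset_missingColors u hu :=
    image_kempePerm_subset_missingColors hi hj (hA.subset_missingColors u hu)
  card_eq u hu := by
    rw [card_image_of_injective _ (kempePerm C u).injective]
    exact hA.card_eq u hu

-- The chain through one of the vertices listing `i` misses another, so `i` stays listed while
-- `j` becomes listed.
theorem exists_kempeSwap_biUnion_ssubset [Finite V]
    (hA : IsTightMissingList G c K N s A) (hc : IsProperEdgeColoringIn G c K) {i j : ℕ}
    (hi : 3 ≤ #{u ∈ N | i ∈ A u}) (hj : ∀ u ∈ N, j ∉ A u) :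
    ∃ C : (kempeGraph G c i j).ConnectedComponent,
      N.biUnion A ⊂ N.biUnion fun u ↦ (A u).image (kempePerm C u) := by
  obtain ⟨x, hx⟩ : Finset.Nonempty {u ∈ N | i ∈ A u} := card_pos.mp (by omega)
  let C := (kempeGraph G c i j).connectedComponentMk x
  obtain ⟨y, hy, hyC⟩ : ∃ y ∈ ({u ∈ N | i ∈ A u} : Finset V), y ∉ C.supp := by
    by_contra! hall
    refine absurd (hc.proper.card_le_two_of_mem_supp_of_notMem_palette C hall ?_) (by omega)
    intro u hu
    rw [mem_filter] at hu
    exact (mem_missingColors.mp (hA.subset_missingColors u hu.1 hu.2)).2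
  rw [mem_filter] at hx hy
  have hjnew : j ∈ N.biUnion fun u ↦ (A u).image (kempePerm C u) := by
    refine mem_biUnion.mpr ⟨x, hx.1, mem_image.mpr ⟨i, hx.2, ?_⟩⟩
    rw [kempePerm_of_mem ConnectedComponent.connectedComponentMk_mem, Equiv.swap_apply_left]
  refine ⟨C, (ssubset_iff_of_subset fun m hm ↦ ?_).mpr ⟨j, hjnew, by simpa using hj⟩⟩
  obtain ⟨u, hu, hmu⟩ := mem_biUnion.mp hm
  by_cases hmi : m = i
  · refine mem_biUnion.mpr ⟨y, hy.1, mem_image.mpr ⟨i, hy.2, ?_⟩⟩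
    rw [kempePerm_of_notMem hyC, Equiv.Perm.one_apply, hmi]
  · have hmj : m ≠ j := fun h ↦ hj u hu (h ▸ hmu)
    exact mem_biUnion.mpr
      ⟨u, hu, mem_image.mpr ⟨m, hmu, kempePerm_apply_of_ne_of_ne hmi hmj⟩⟩

theorem exists_recoloring_exists_card_eq_one [Finite V] (hA : IsTightMissingList G c K N s A)
    (hc : IsProperEdgeColoringIn G c K) (hs : s ∈ N) (hN : #N ≤ #K) :
    ∃ c' A', IsProperEdgeColoringIn G c' K ∧ IsTightMissingList G c' K N s A' ∧
      ∃ m ∈ K, #{u ∈ N | m ∈ A' u} = 1 := by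
  classical
  induction hn : #K - #(N.biUnion A) using Nat.strong_induction_on generalizing c A with
  | _ n ih =>
  obtain hone | ⟨⟨i, hiK, hi⟩, j, hjK, hj⟩ :=
    hA.exists_card_eq_one_or_exists_three_le_card_and_exists_card_eq_zero hs hN
  · exact ⟨c, A, hc, hA, hone⟩
  · obtain ⟨C, hC⟩ :=
      hA.exists_kempeSwap_biUnion_ssubset hc hi (filter_eq_empty_iff.mp (card_eq_zero.mp hj))
    have hA' := hA.image_kempePerm hiK hjK C
    have hlt := card_lt_card hC
    have hle := card_le_card hA'.biUnion_subset
    exact ih _ (by omega) hA' (hc.kempeSwap hiK hjK C) rfl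

end IsTightMissingList

end MissingLists

section Fournier

variable {V : Type*} {G : SimpleGraph V} {c d : Sym2 V → ℕ} {K : Finset ℕ} {κ : ℕ}
  {M : Set (Sym2 V)} {v : V}

open Classical in
theorem mem_palette_piecewise {m : ℕ} :
    m ∈ palette G (M.piecewise (fun _ ↦ κ) d) v ↔
      (m = κ ∧ ∃ w, G.Adj v w ∧ s(v, w) ∈ M) ∨ m ∈ palette (G.deleteEdges M) d v := by
  simp only [mem_palette_iff, deleteEdges_adj, Set.piecewise]
  grind

open Classical in
theorem IsProperEdgeColoringIn.piecewise (hd : IsProperEdgeColoringIn (G.deleteEdges M) d K)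
    (hκ : κ ∉ K) (hM : ∀ ⦃u v w⦄, G.Adj u v → G.Adj u w → s(u, v) ∈ M → s(u, w) ∈ M → v = w) :
    IsProperEdgeColoringIn G (M.piecewise (fun _ ↦ κ) d) (insert κ K) where
  proper := isProperEdgeColoring_iff_injOn.mpr fun u x hx y hy hxy ↦ by
    have hne {w : V} (hw : G.Adj u w) (hwM : s(u, w) ∉ M) : d s(u, w) ≠ κ := fun h ↦
      hκ (h ▸ hd.color_mem (deleteEdges_adj.mpr ⟨hw, hwM⟩))
    by_cases hxM : s(u, x) ∈ M <;> by_cases hyM : s(u, y) ∈ M <;>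
      simp only [Set.piecewise, hxM, hyM, if_true, if_false] at hxy
    · exact hM hx hy hxM hyM
    · exact absurd hxy.symm (hne hy hyM)
    · exact absurd hxy (hne hx hxM)
    · exact isProperEdgeColoring_iff_injOn.mp hd.proper u (deleteEdges_adj.mpr ⟨hx, hxM⟩)
        (deleteEdges_adj.mpr ⟨hy, hyM⟩) hxy
  palette_subset u m hm := by
    obtain ⟨rfl, -⟩ | hm := mem_palette_piecewise.mp hm
    · exact mem_insert_self m K
    · exact mem_insert_of_mem (hd.palette_subset u hm)

theorem IsProperEdgeColoringIn.deleteEdges_preimage (hc : IsProperEdgeColoringIn G c K) (κ : ℕ) :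
    IsProperEdgeColoringIn (G.deleteEdges (c ⁻¹' {κ})) c (K.erase κ) where
  proper := hc.proper.mono (deleteEdges_le _)
  palette_subset v := by
    rw [palette_deleteEdges_preimage, coe_erase]
    exact Set.sdiff_subset_sdiff_left (hc.palette_subset v)

theorem missingColors_deleteEdges_preimage (κ : ℕ) :
    missingColors (G.deleteEdges (c ⁻¹' {κ})) c (K.erase κ) v =
      (missingColors G c K v).erase κ := by
  ext m
  simp only [mem_missingColors, palette_deleteEdges_preimage, mem_erase, Set.mem_sdiff,
    Set.mem_singleton_iff]
  tauto

theorem IsProperEdgeColoringIn.exists_peelable_color [Finite V] {N : Finset V} {s : V}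
    (hc : IsProperEdgeColoringIn G c K) (hs : s ∈ N) (hN : #N ≤ #K)
    (hone : ∀ u ∈ N, 1 ≤ #(missingColors G c K u))
    (htwo : ∀ u ∈ N, u ≠ s → 2 ≤ #(missingColors G c K u)) :
    ∃ c', IsProperEdgeColoringIn G c' K ∧ ∃ u ∈ N, ∃ κ ∈ missingColors G c' K u,
      ∀ w ∈ N, w ≠ u → 1 ≤ #((missingColors G c' K w).erase κ) ∧
        (w ≠ s → 2 ≤ #((missingColors G c' K w).erase κ)) := by
  obtain ⟨A₀, hA₀⟩ := exists_isTightMissingList hone htwo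
  obtain ⟨c', A, hc', hA, κ, -, hκ⟩ := hA₀.exists_recoloring_exists_card_eq_one hc hs hN
  obtain ⟨u, hu⟩ := card_eq_one.mp hκ
  have hmem (w : V) : w ∈ N ∧ κ ∈ A w ↔ w = u := by
    simpa only [mem_filter, mem_singleton] using Finset.ext_iff.mp hu w
  obtain ⟨huN, hκu⟩ := (hmem u).mpr rfl
  refine ⟨c', hc', u, huN, κ, hA.subset_missingColors u huN hκu, fun w hw hwu ↦ ?_⟩
  have hle : #(A w) ≤ #((missingColors G c' K w).erase κ) := card_le_card <|
    subset_erase.mpr ⟨hA.subset_missingColors w hw, fun hκw ↦ hwu ((hmem w).mp ⟨hw, hκw⟩)⟩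
  exact ⟨(hA.one_le_card hw).trans hle, fun hws ↦ ((hA.card_eq w hw).2 hws).ge.trans hle⟩

theorem IsProperEdgeColoringIn.exists_injOn_missingColors_of_peel [DecidableEq V] {N : Finset V}
    {u : V} {f : V → ℕ} (hc : IsProperEdgeColoringIn G c K) (hκ : κ ∈ missingColors G c K u)
    (hd : IsProperEdgeColoringIn (G.deleteEdges (c ⁻¹' {κ})) d (K.erase κ))
    (hinj : Set.InjOn f (N.erase u))
    (hf : ∀ w ∈ N.erase u, f w ∈ missingColors (G.deleteEdges (c ⁻¹' {κ})) d (K.erase κ) w) :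
    ∃ c' f', IsProperEdgeColoringIn G c' K ∧ Set.InjOn f' N ∧
      ∀ w ∈ N, f' w ∈ missingColors G c' K w := by
  classical
  obtain ⟨hκK, hκu⟩ := mem_missingColors.mp hκ
  have hfw {w : V} (hw : w ∈ N) (hwu : w ≠ u) : (f w ≠ κ ∧ f w ∈ K) ∧
      f w ∉ palette (G.deleteEdges (c ⁻¹' {κ})) d w := by
    simpa only [mem_missingColors, mem_erase] using hf w (mem_erase.mpr ⟨hwu, hw⟩)
  refine ⟨(c ⁻¹' {κ}).piecewise (fun _ ↦ κ) d, Function.update f u κ, ?_, ?_, ?_⟩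
  · have hmatching ⦃x y z : V⦄ (hy : G.Adj x y) (hz : G.Adj x z) (hyκ : c s(x, y) = κ)
        (hzκ : c s(x, z) = κ) : y = z :=
      isProperEdgeColoring_iff_injOn.mp hc.proper x hy hz (hyκ.trans hzκ.symm)
    simpa only [insert_erase hκK] using hd.piecewise (notMem_erase κ K) hmatching
  · intro x hx y hy hxy
    by_cases hxu : x = u <;> by_cases hyu : y = u <;>
      simp only [Function.update_apply, hxu, hyu, if_true, if_false] at hxy
    · rw [hxu, hyu]
    · exact absurd hxy.symm (hfw hy hyu).1.1
    · exact absurd hxy (hfw hx hxu).1.1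
    · exact hinj (mem_erase.mpr ⟨hxu, hx⟩) (mem_erase.mpr ⟨hyu, hy⟩) hxy
  · intro w hw
    rw [mem_missingColors, mem_palette_piecewise]
    obtain rfl | hwu := eq_or_ne w u
    · rw [Function.update_self]
      refine ⟨hκK, ?_⟩
      rintro (⟨-, hclass⟩ | hκd)
      · exact hκu (mem_palette_iff.mpr hclass)
      · exact notMem_erase κ K (hd.palette_subset w hκd)
    · rw [Function.update_of_ne hwu]
      obtain ⟨⟨hne, hK⟩, hmissing⟩ := hfw hw hwu
      exact ⟨hK, by rintro (⟨heq, -⟩ | hmem) <;> contradiction⟩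

-- Peel off one vertex of `N` together with a color class missing there. Demanding only one missing
-- color at `s` makes the list lengths odd without losing anything in the induction.
theorem IsProperEdgeColoringIn.exists_injOn_missingColors [Finite V] {N : Finset V} {s : V}
    (hc : IsProperEdgeColoringIn G c K) (hN : #N ≤ #K)
    (hone : ∀ u ∈ N, 1 ≤ #(missingColors G c K u))
    (htwo : ∀ u ∈ N, u ≠ s → 2 ≤ #(missingColors G c K u)) :
    ∃ d f, IsProperEdgeColoringIn G d K ∧ Set.InjOn f N ∧
      ∀ u ∈ N, f u ∈ missingColors G d K u := by
  classical
  induction hn : #N generalizing G c K N s with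
  | zero =>
    obtain rfl := card_eq_zero.mp hn
    exact ⟨c, fun _ ↦ 0, hc, by simp, by simp⟩
  | succ n ih =>
    obtain ⟨t, ht, htwo'⟩ : ∃ t ∈ N, ∀ u ∈ N, u ≠ t → 2 ≤ #(missingColors G c K u) := by
      by_cases hs : s ∈ N
      · exact ⟨s, hs, htwo⟩
      · obtain ⟨t, ht⟩ : N.Nonempty := card_pos.mp (by omega)
        exact ⟨t, ht, fun u hu _ ↦ htwo u hu (ne_of_mem_of_not_mem hu hs)⟩
    obtain ⟨c', hc', u, hu, κ, hκ, hrest⟩ := hc.exists_peelable_color ht hN hone htwo'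
    have hκK : κ ∈ K := (mem_missingColors.mp hκ).1
    have hcard : #(N.erase u) = n := by rw [card_erase_of_mem hu, hn, Nat.add_sub_cancel]
    obtain ⟨d, f, hd, hinj, hf⟩ := ih (N := N.erase u) (s := t) (hc'.deleteEdges_preimage κ)
      (by rw [card_erase_of_mem hu, card_erase_of_mem hκK]; omega)
      (fun w hw ↦ by
        rw [missingColors_deleteEdges_preimage]
        exact (hrest w (mem_of_mem_erase hw) (ne_of_mem_erase hw)).1)
      (fun w hw ↦ by
        rw [missingColors_deleteEdges_preimage]
        exact (hrest w (mem_of_mem_erase hw) (ne_of_mem_erase hw)).2) hcard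
    exact hc'.exists_injOn_missingColors_of_peel hκ hd hinj hf

theorem exists_eq_on_incident_and_eq_of_notMem {α : Type*} (v : V) (f : V → α) (d : Sym2 V → α) :
    ∃ c : Sym2 V → α, (∀ w, c s(v, w) = f w) ∧ ∀ e, v ∉ e → c e = d e := by
  classical
  refine ⟨fun e ↦ if h : v ∈ e then f (Sym2.Mem.other h) else d e, fun w ↦ ?_, fun e he ↦ ?_⟩
  · have hmem : v ∈ s(v, w) := Sym2.mem_mk_left v w
    simp only [dif_pos hmem, Sym2.congr_right.mp (Sym2.other_spec hmem)]
  · simp only [dif_neg he]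

theorem IsProperEdgeColoringIn.exists_of_deleteIncidenceSet {f : V → ℕ}
    (hd : IsProperEdgeColoringIn (G.deleteIncidenceSet v) d K)
    (hinj : Set.InjOn f (G.neighborSet v))
    (hf : ∀ u ∈ G.neighborSet v, f u ∈ missingColors (G.deleteIncidenceSet v) d K u) :
    ∃ c, IsProperEdgeColoringIn G c K := by
  obtain ⟨c, hcv, hcd⟩ := exists_eq_on_incident_and_eq_of_notMem v f d
  have hcv' (x : V) : c s(x, v) = f x := by rw [Sym2.eq_swap, hcv]
  have hcd' {x y : V} (hx : x ≠ v) (hy : y ≠ v) : c s(x, y) = d s(x, y) :=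
    hcd _ (by simpa using ⟨hx.symm, hy.symm⟩)
  have hadj {x y : V} (h : G.Adj x y) (hx : x ≠ v) (hy : y ≠ v) :
      (G.deleteIncidenceSet v).Adj x y := deleteIncidenceSet_adj.mpr ⟨h, hx, hy⟩
  have hfd {x y : V} (hxv : G.Adj x v) (hxy : G.Adj x y) (hy : y ≠ v) : d s(x, y) ≠ f x :=
    fun h ↦ (mem_missingColors.mp (hf x hxv.symm)).2
      (h ▸ color_mem_palette (hadj hxy hxv.ne hy))
  refine ⟨c, isProperEdgeColoring_iff_injOn.mpr fun x y hy z hz hyz ↦ ?_, fun x m hm ↦ ?_⟩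
  · by_cases hx : x = v
    · subst hx
      exact hinj hy hz (by simpa only [hcv] using hyz)
    · by_cases hyv : y = v <;> by_cases hzv : z = v
      · rw [hyv, hzv]
      · subst hyv
        exact absurd (by simpa only [hcv', hcd' hx hzv] using hyz.symm) (hfd hy hz hzv)
      · subst hzv
        exact absurd (by simpa only [hcv', hcd' hx hyv] using hyz) (hfd hz hy hyv)
      · exact isProperEdgeColoring_iff_injOn.mp hd.proper x (hadj hy hx hyv) (hadj hz hx hzv)
          (by simpa only [hcd' hx hyv, hcd' hx hzv] using hyz)
  · obtain ⟨y, hxy, rfl⟩ := mem_palette_iff.mp hm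
    by_cases hx : x = v
    · subst hx
      exact hcv y ▸ (mem_missingColors.mp (hf y hxy)).1
    · by_cases hy : y = v
      · subst hy
        exact hcv' x ▸ (mem_missingColors.mp (hf x hxy.symm)).1
      · exact hcd' hx hy ▸ hd.color_mem (hadj hxy hx hy)

theorem exists_adj_and_forall_adj_degree_lt [Fintype V] [DecidableRel G.Adj] {k : ℕ}
    (hG : G ≠ ⊥) (hdeg : ∀ v, G.degree v ≤ k) (hind : G.IsIndepSet {v | G.degree v = k}) :
    ∃ v w, G.Adj v w ∧ ∀ u, G.Adj v u → G.degree u < k := by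
  by_cases h : ∃ v w, G.Adj v w ∧ G.degree v = k
  · obtain ⟨v, w, hvw, hv⟩ := h
    exact ⟨v, w, hvw, fun u hvu ↦ (hdeg u).lt_of_ne fun hu ↦ hind hv hu hvu.ne hvu⟩
  · obtain ⟨v, w, hvw⟩ := ne_bot_iff_exists_adj.mp hG
    exact ⟨v, w, hvw, fun u hvu ↦ (hdeg u).lt_of_ne fun hu ↦ h ⟨u, v, hvu.symm, hu⟩⟩

/-- **Fournier's theorem.** -/
theorem exists_isProperEdgeColoringIn_of_isIndepSet [Fintype V] (G : SimpleGraph V)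
    [DecidableRel G.Adj] (hdeg : ∀ v, G.degree v ≤ #K)
    (hind : G.IsIndepSet {v | G.degree v = #K}) : ∃ c, IsProperEdgeColoringIn G c K := by
  classical
  induction hn : #G.edgeFinset using Nat.strong_induction_on generalizing G with
  | _ n ih =>
  by_cases hG : G = ⊥
  · exact ⟨fun _ ↦ 0, by simp [IsProperEdgeColoring, hG], fun v ↦ by simp [palette, hG]⟩
  obtain ⟨v, w, hvw, hlt⟩ := exists_adj_and_forall_adj_degree_lt hG hdeg hind
  let H := G.deleteIncidenceSet v
  have hle : H ≤ G := G.deleteIncidenceSet_le v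
  have hnadj (u : V) : ¬H.Adj u v := fun h ↦ (deleteIncidenceSet_adj.mp h).2.2 rfl
  have hfull {u : V} (hu : H.degree u = #K) : G.degree u = #K :=
    (hdeg u).antisymm (hu ▸ degree_le_of_le hle)
  have hlt_edges : #H.edgeFinset < n := hn ▸ card_lt_card
    (edgeFinset_ssubset_edgeFinset.mpr (hle.lt_of_ne fun h ↦ hnadj w (h ▸ hvw.symm)))
  obtain ⟨c, hc⟩ := ih _ hlt_edges H
    (fun u ↦ (degree_le_of_le hle).trans (hdeg u))
    (fun x hx y hy hxy h ↦ hind (hfull hx) (hfull hy) hxy (hle h)) rfl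
  have hmissing : ∀ u ∈ G.neighborFinset v, 2 ≤ #(missingColors H c K u) := by
    intro u hu
    rw [mem_neighborFinset] at hu
    have hdrop : H.degree u < G.degree u := degree_lt_degree_of_le hle hu.symm (hnadj u)
    have hcount := card_le_card_missingColors_add_degree (G := H) (c := c) (K := K) (v := u)
    have := hlt u hu
    omega
  obtain ⟨d, f, hd, hinj, hf⟩ := hc.exists_injOn_missingColors (s := w) (hdeg v)
    (fun u hu ↦ one_le_two.trans (hmissing u hu)) fun u hu _ ↦ hmissing u hu
  exact hd.exists_of_deleteIncidenceSet (by simpa using hinj) (by simpa using hf)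

end Fournier

section Matching

variable {V : Type*} (G : SimpleGraph V)

theorem exists_isMatching_verts_subset_forall_adj [Finite V] (D : Set V) :
    ∃ M : G.Subgraph, M.IsMatching ∧ M.verts ⊆ D ∧
      ∀ u ∈ D, ∀ v ∈ D, G.Adj u v → u ∈ M.verts ∨ v ∈ M.verts := by
  obtain ⟨M, hM⟩ := (Set.toFinite {M : G.Subgraph | M.IsMatching ∧ M.verts ⊆ D}).exists_maximal
    ⟨⊥, by simp [Subgraph.IsMatching]⟩
  refine ⟨M, hM.prop.1, hM.prop.2, fun u hu v hv huv ↦ ?_⟩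
  by_contra! hfree
  have hdisj : Disjoint M.support (G.subgraphOfAdj huv).support := by
    rw [support_subgraphOfAdj, hM.prop.1.support_eq_verts]
    simpa using hfree
  have hsup : (M ⊔ G.subgraphOfAdj huv).IsMatching ∧ (M ⊔ G.subgraphOfAdj huv).verts ⊆ D :=
    ⟨hM.prop.1.sup (.subgraphOfAdj huv) hdisj,
      Set.union_subset hM.prop.2 (Set.insert_subset hu (Set.singleton_subset_iff.mpr hv))⟩
  exact hfree.1 ((hM.le_of_ge hsup le_sup_left).1 (Or.inr (Set.mem_insert u {v})))

theorem exists_isProperEdgeColoringIn_insert_forall_mem_palette_degree_eq [Fintype V]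
    [DecidableRel G.Adj] {K : Finset ℕ} {κ : ℕ} (hκ : κ ∉ K) (hdeg : ∀ v, G.degree v ≤ #K) :
    ∃ c, IsProperEdgeColoringIn G c (insert κ K) ∧
      ∀ v, κ ∈ palette G c v → G.degree v = #K := by
  classical
  obtain ⟨M, hM, hMdeg, hMmax⟩ :=
    exists_isMatching_verts_subset_forall_adj G {v | G.degree v = #K}
  have hle : G.deleteEdges M.edgeSet ≤ G := deleteEdges_le _
  have hfull {v : V} (hv : (G.deleteEdges M.edgeSet).degree v = #K) :
      G.degree v = #K ∧ v ∉ M.verts := by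
    refine ⟨(hdeg v).antisymm (hv ▸ degree_le_of_le hle), fun hvM ↦ ?_⟩
    obtain ⟨w, hvw, -⟩ := hM hvM
    have hlt := degree_lt_degree_of_le hle hvw.adj_sub fun h ↦ (deleteEdges_adj.mp h).2 hvw
    exact (hlt.trans_le (hdeg v)).ne hv
  obtain ⟨d, hd⟩ := exists_isProperEdgeColoringIn_of_isIndepSet (G.deleteEdges M.edgeSet)
    (fun v ↦ (degree_le_of_le hle).trans (hdeg v)) fun u hu v hv _ huv ↦
      (hMmax u (hfull hu).1 v (hfull hv).1 (hle huv)).elim (hfull hu).2 (hfull hv).2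
  refine ⟨_, hd.piecewise hκ fun u v w _ _ hv hw ↦ hM.eq_of_adj_left hv hw, fun v hv ↦ ?_⟩
  obtain ⟨-, w, -, hvw⟩ | hv := mem_palette_piecewise.mp hv
  · exact hMdeg (M.edge_vert hvw)
  · exact absurd (hd.palette_subset v hv) hκ

end Matching

section PaletteIndex

variable {V : Type*} {G : SimpleGraph V} {c : Sym2 V → ℕ}

theorem IsProperEdgeColoring.paletteIndex_le_card (hc : IsProperEdgeColoring G c)
    {F : Finset (Finset ℕ)} (hF : ∀ v, ∃ P ∈ F, ↑P = palette G c v) : paletteIndex G ≤ #F := by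
  have hrange : Set.range (palette G c) ⊆ (fun P : Finset ℕ ↦ (P : Set ℕ)) '' F := by
    rintro _ ⟨v, rfl⟩
    exact hF v
  calc paletteIndex G ≤ (Set.range (palette G c)).ncard := Nat.sInf_le ⟨c, hc, rfl⟩
    _ ≤ ((fun P : Finset ℕ ↦ (P : Set ℕ)) '' F).ncard :=
      Set.ncard_le_ncard hrange (F.finite_toSet.image _)
    _ ≤ #F := (Set.ncard_image_le F.finite_toSet).trans (Set.ncard_coe_finset F).le

theorem IsProperEdgeColoring.exists_mem_powersetCard_coe_eq_palette {v : V}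
    [Fintype (G.neighborSet v)] (hc : IsProperEdgeColoring G c) {K : Finset ℕ}
    (hK : palette G c v ⊆ K) : ∃ P ∈ K.powersetCard (G.degree v), ↑P = palette G c v := by
  obtain ⟨P, hP⟩ := (K.finite_toSet.subset hK).exists_finset_coe
  refine ⟨P, mem_powersetCard.mpr ⟨by simpa [← hP] using hK, ?_⟩, hP⟩
  rw [← hc.ncard_palette, ← hP, Set.ncard_coe_finset]

theorem sum_choose_Ico_le_sq {m k : ℕ} (h : k - m ≤ 2) : ∑ d ∈ Ico m k, k.choose d ≤ k ^ 2 := by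
  have hsub : Ico m k ⊆ Ico (k - 2) k := Ico_subset_Ico_left (by omega)
  refine (sum_le_sum_of_subset hsub).trans ?_
  obtain _ | _ | k := k
  · simp
  · simp
  · have hchoose : (k + 2).choose k = (k + 2) * (k + 1) / 2 := by
      rw [Nat.choose_symm_add, Nat.choose_two_right, Nat.add_succ_sub_one]
    have hhalf := Nat.div_mul_le_self ((k + 2) * (k + 1)) 2
    calc ∑ d ∈ Ico k (k + 2), (k + 2).choose d = (k + 2).choose k + (k + 2).choose (k + 1) := by
          rw [sum_Ico_succ_top (by omega), sum_Ico_succ_top le_rfl, Ico_self, sum_empty, zero_add]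
      _ = (k + 2) * (k + 1) / 2 + (k + 2) := by rw [hchoose, Nat.choose_succ_self_right]
      _ ≤ (k + 2) ^ 2 := by nlinarith

theorem palette_index_almost_regular_general {V : Type*} [Fintype V] (G : SimpleGraph V)
    [DecidableRel G.Adj] :
    paletteIndex G ≤ ∑ d ∈ Ico G.minDegree G.maxDegree, G.maxDegree.choose d + G.maxDegree + 1 := by
  set Δ := G.maxDegree
  obtain ⟨c, hc, hΔ⟩ := exists_isProperEdgeColoringIn_insert_forall_mem_palette_degree_eq G
    (K := range Δ) (κ := Δ) notMem_range_self (by simpa using G.degree_le_maxDegree)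
  rw [card_range] at hΔ
  rw [← range_add_one] at hc
  let F := (Ico G.minDegree Δ).biUnion (fun d ↦ (range Δ).powersetCard d) ∪
    (range (Δ + 1)).powersetCard Δ
  have hF (v : V) : ∃ P ∈ F, ↑P = palette G c v := by
    obtain hv | hv := (G.degree_le_maxDegree v).eq_or_lt
    · obtain ⟨P, hP, hPv⟩ := hc.proper.exists_mem_powersetCard_coe_eq_palette (hc.palette_subset v)
      rw [hv] at hP
      exact ⟨P, mem_union_right _ hP, hPv⟩
    · have hsub : palette G c v ⊆ range Δ := fun m hm ↦ by
        have hne : m ≠ Δ := fun h ↦ hv.ne (hΔ v (h ▸ hm))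
        have := mem_range.mp (hc.palette_subset v hm)
        exact mem_range.mpr (by omega)
      obtain ⟨P, hP, hPv⟩ := hc.proper.exists_mem_powersetCard_coe_eq_palette hsub
      exact ⟨P, mem_union_left _ <| mem_biUnion.mpr
        ⟨G.degree v, mem_Ico.mpr ⟨G.minDegree_le_degree v, hv⟩, hP⟩, hPv⟩
  calc paletteIndex G ≤ #F := hc.proper.paletteIndex_le_card hF
    _ ≤ ∑ d ∈ Ico G.minDegree Δ, #((range Δ).powersetCard d) + #((range (Δ + 1)).powersetCard Δ) :=
      (card_union_le _ _).trans (Nat.add_le_add_right card_biUnion_le _)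
    _ = ∑ d ∈ Ico G.minDegree Δ, Δ.choose d + Δ + 1 := by
      simp only [card_powersetCard, card_range, Nat.choose_succ_self_right, add_assoc]

end PaletteIndex

/-- If `Δ(G) − δ(G) ≤ 2`, then `š(G) ≤ Δ(G)² + Δ(G) + 1`. -/
theorem palette_index_almost_regular {V : Type*} [Fintype V]
    (G : SimpleGraph V) [DecidableRel G.Adj]
    (hiso : ∀ v : V, 0 < G.degree v)
    (hdeg : G.maxDegree - G.minDegree ≤ 2) :
    paletteIndex G ≤ G.maxDegree ^ 2 + G.maxDegree + 1 :=
  (palette_index_almost_regular_general G).trans (by gcongr; exact sum_choose_Ico_le_sq hdeg)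
end

section
/- If G is a finite bipartite graph with no isolated vertices and maximum degree 4, then š(G) ≤ 11; moreover, if in addition G has no vertices of degree 1, then š(G) ≤ 7. -/
open SimpleGraph Finset

/-!
The engine is a balancing principle: if `a` is a fixed-point-free involution of `X` and `X` is
partitioned into finite fibres, some `f : X → Bool` is flipped by `a` and splits every fibre as
evenly as possible. Indeed, pair up each fibre, leaving at most one point over; two involutions
generate only paths and even cycles, so some `f` is flipped by both `a` and the pairing.

Take `X` to be the darts of `G` and `a` the reversal, so that `f` is an orientation, and use the
principle three times. First orient `G` so that out- and in-degree at each vertex differ by at most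
one. Then find a second orientation, balanced at each vertex of degree at most two and, at each
other vertex, balanced separately on the outgoing and on the incoming edges. The sum `g` of the two
orientations is an edge coloring, constant at vertices of degree two, with each color at most twice
at each vertex. Finally an orientation balanced on each color class of `g` at each vertex, added to
the bipartition, properly colors each of the two classes with two colors. The palettes of this
coloring by `Bool × Bool` are among the `4` singletons, the `2` pairs with equal first coordinate,
the `4` triples and the whole set.
-/

section Involution

variable {X K : Type*}

lemma exists_bool_flip_of_involutive {a : X → X} (ha : a.Involutive) (hfix : ∀ x, a x ≠ x) :
    ∃ f : X → Bool, ∀ x, f (a x) = !f x := by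
  classical
  let _ : LinearOrder X := linearOrderOfSTO WellOrderingRel
  refine ⟨fun x => decide (x < a x), fun x => ?_⟩
  simp only [ha x, ← decide_not, decide_eq_decide, not_lt]
  exact ⟨le_of_lt, fun h => h.lt_of_ne (hfix x)⟩

lemma conj_mul_eq_inv_of_involutive {a b : Equiv.Perm X} (ha : Function.Involutive a)
    (hb : Function.Involutive b) : a * (a * b) * a⁻¹ = (a * b)⁻¹ := by
  have hmul_self {c : Equiv.Perm X} (hc : Function.Involutive c) : c * c = 1 := Equiv.ext hc
  rw [mul_inv_rev, ← mul_assoc, hmul_self ha, one_mul, inv_eq_of_mul_eq_one_right (hmul_self hb)]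

-- If `a x = (a * b) ^ k x`, then `a` fixes `(a * b) ^ m x` when `k = 2 * m`, and `b` fixes it
-- when `k = 2 * m + 1`.
lemma not_sameCycle_mul_of_involutive {a b : Equiv.Perm X} (ha : Function.Involutive a)
    (hb : Function.Involutive b) (hafix : ∀ x, a x ≠ x) (hbfix : ∀ x, b x ≠ x) (x : X) :
    ¬ (a * b).SameCycle x (a x) := by
  have hpow (m : ℤ) : a (((a * b) ^ m) x) = ((a * b) ^ (-m)) (a x) := by
    rw [zpow_neg, ← inv_zpow, ← conj_mul_eq_inv_of_involutive ha hb, conj_zpow]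
    simp
  rintro ⟨k, hk⟩
  have hreflect (m : ℤ) : a (((a * b) ^ m) x) = ((a * b) ^ (k - m)) x := by
    rw [hpow, ← hk, ← Equiv.Perm.mul_apply, ← zpow_add, neg_add_eq_sub]
  obtain ⟨m, rfl | rfl⟩ := Int.even_or_odd' k
  · exact hafix _ ((hreflect m).trans (by rw [two_mul, add_sub_cancel_right]))
  · refine hbfix (((a * b) ^ m) x) (a.injective ?_)
    rw [hreflect m, show 2 * m + 1 - m = 1 + m by ring, zpow_one_add]
    rfl

lemma exists_bool_flip_of_involutive_pair_of_ne {a b : X → X} (ha : a.Involutive)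
    (hb : b.Involutive) (hafix : ∀ x, a x ≠ x) (hbfix : ∀ x, b x ≠ x) :
    ∃ f : X → Bool, (∀ x, f (a x) = !f x) ∧ ∀ x, f (b x) = !f x := by
  let s : Equiv.Perm X := ha.toPerm * hb.toPerm
  have hmap {x y : X} (hxy : s.SameCycle x y) : s.SameCycle (a x) (a y) := by
    rw [← Equiv.Perm.sameCycle_inv, ← conj_mul_eq_inv_of_involutive ha hb]
    exact hxy.conj
  let cycles : Setoid X := Equiv.Perm.SameCycle.setoid s
  let aOrbit : Quotient cycles → Quotient cycles := Quotient.map a fun _ _ => hmap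
  have haOrbit : aOrbit.Involutive := by
    rintro ⟨x⟩
    exact congrArg (Quotient.mk _) (ha x)
  have haOrbit_ne : ∀ q, aOrbit q ≠ q := by
    rintro ⟨x⟩ h
    exact not_sameCycle_mul_of_involutive ha hb hafix hbfix x (Quotient.exact h).symm
  obtain ⟨f, hf⟩ := exists_bool_flip_of_involutive haOrbit haOrbit_ne
  refine ⟨fun x => f ⟦x⟧, fun x => hf ⟦x⟧, fun x => ?_⟩
  have horbit : aOrbit ⟦b x⟧ = ⟦x⟧ := Quotient.sound (Equiv.Perm.sameCycle_apply_left.2 (.refl s x))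
  beta_reduce
  rw [← horbit, hf, Bool.not_not]

open Classical in
/-- The lift of a self-map to two copies of its domain that exchanges the two copies of each fixed
point; it turns an involution into one without fixed points. -/
noncomputable def swapFixedPoints (a : X → X) (p : X × Bool) : X × Bool :=
  if a p.1 = p.1 then (p.1, !p.2) else (a p.1, p.2)

lemma swapFixedPoints_ne (a : X → X) (p : X × Bool) : swapFixedPoints a p ≠ p := by
  by_cases h : a p.1 = p.1 <;> simp [swapFixedPoints, h, Prod.ext_iff]

lemma swapFixedPoints_involutive {a : X → X} (ha : a.Involutive) :
    (swapFixedPoints a).Involutive := by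
  intro p
  by_cases h : a p.1 = p.1
  · simp [swapFixedPoints, h]
  · simp [swapFixedPoints, h, ha p.1, Ne.symm h]

lemma exists_bool_flip_of_involutive_pair {a b : X → X} (ha : a.Involutive) (hb : b.Involutive) :
    ∃ f : X → Bool, (∀ x, a x ≠ x → f (a x) = !f x) ∧ ∀ x, b x ≠ x → f (b x) = !f x := by
  obtain ⟨f, hfa, hfb⟩ := exists_bool_flip_of_involutive_pair_of_ne
    (swapFixedPoints_involutive ha) (swapFixedPoints_involutive hb)
    (swapFixedPoints_ne a) (swapFixedPoints_ne b)
  refine ⟨fun x => f (x, true), fun x hx => ?_, fun x hx => ?_⟩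
  · simpa [swapFixedPoints, hx] using hfa (x, true)
  · simpa [swapFixedPoints, hx] using hfb (x, true)

variable (X) in
lemma exists_involutive_fixedPoints_subsingleton [Finite X] :
    ∃ b : X → X, b.Involutive ∧ b.fixedPoints.Subsingleton := by
  obtain ⟨n, ⟨e⟩⟩ := Finite.exists_equiv_fin X
  refine ⟨fun x => e.symm (e x).rev, fun x => by simp, fun x hx y hy => e.injective ?_⟩
  have hx : (e x).rev = e x := e.symm_apply_eq.1 hx
  have hy : (e y).rev = e y := e.symm_apply_eq.1 hy
  rw [Fin.ext_iff, Fin.val_rev] at hx hy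
  exact Fin.ext (by omega)

lemma exists_involutive_fixedPoints_subsingleton_fiber {κ : X → K}
    (hκ : ∀ k, (κ ⁻¹' {k}).Finite) :
    ∃ b : X → X, b.Involutive ∧ (∀ x, κ (b x) = κ x) ∧
      ∀ k, (κ ⁻¹' {k} ∩ b.fixedPoints).Subsingleton := by
  have (k : K) : Finite (κ ⁻¹' {k}) := hκ k
  choose β hβ hβfix using fun k => exists_involutive_fixedPoints_subsingleton (κ ⁻¹' {k})
  let b (x : X) : X := β (κ x) ⟨x, rfl⟩
  have hb {k : K} (x : κ ⁻¹' {k}) : b x = β k x := by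
    obtain ⟨x, rfl⟩ := x
    rfl
  refine ⟨b, fun x => ?_, fun x => (β (κ x) ⟨x, rfl⟩).2, fun k x hx y hy => ?_⟩
  · rw [show b x = β (κ x) ⟨x, rfl⟩ from rfl, hb, hβ]
  · have hfix {z : X} (hz : z ∈ κ ⁻¹' {k} ∩ b.fixedPoints) :
        ⟨z, hz.1⟩ ∈ (β k).fixedPoints :=
      Subtype.ext ((hb ⟨z, hz.1⟩).symm.trans hz.2)
    exact congrArg Subtype.val (hβfix k (hfix hx) (hfix hy))

/-- `f` splits the finite set `s` into two parts whose sizes differ by at most one. -/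
def IsBalancedOn (f : X → Bool) (s : Set X) : Prop :=
  ∀ c, 2 * (s ∩ f ⁻¹' {c}).ncard ≤ s.ncard + 1

lemma IsBalancedOn.injOn {f : X → Bool} {s : Set X} (hf : IsBalancedOn f s) (hs : s.Finite)
    (hcard : s.ncard ≤ 2) : s.InjOn f := by
  intro x hx y hy hxy
  have hle : (s ∩ f ⁻¹' {f y}).ncard ≤ 1 := by
    have := hf (f y)
    omega
  exact (Set.ncard_le_one (hs.inter_of_left _)).1 hle x ⟨hx, hxy⟩ y ⟨hy, rfl⟩

lemma isBalancedOn_of_flip {f : X → Bool} {b : X → X} {s : Set X} (hs : s.Finite)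
    (hb : b.Involutive) (hbs : ∀ x ∈ s, b x ∈ s) (hfix : (s ∩ b.fixedPoints).Subsingleton)
    (hf : ∀ x, b x ≠ x → f (b x) = !f x) : IsBalancedOn f s := by
  intro c
  have hcover : s ∩ f ⁻¹' {c} ⊆ (s ∩ b.fixedPoints) ∪ b '' (s \ f ⁻¹' {c}) := by
    rintro x ⟨hx, rfl⟩
    by_cases hbx : b x = x
    · exact .inl ⟨hx, hbx⟩
    · exact .inr ⟨b x, ⟨hbs x hx, by simp [hf x hbx]⟩, hb x⟩
  have hle : (s ∩ f ⁻¹' {c}).ncard ≤ 1 + (s \ f ⁻¹' {c}).ncard :=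
    calc
      (s ∩ f ⁻¹' {c}).ncard ≤ ((s ∩ b.fixedPoints) ∪ b '' (s \ f ⁻¹' {c})).ncard :=
        Set.ncard_le_ncard hcover ((hs.inter_of_left _).union (hs.sdiff.image b))
      _ ≤ (s ∩ b.fixedPoints).ncard + (b '' (s \ f ⁻¹' {c})).ncard := Set.ncard_union_le _ _
      _ ≤ 1 + (s \ f ⁻¹' {c}).ncard :=
        Nat.add_le_add ((Set.ncard_le_one (hs.inter_of_left _)).2 fun _ hx _ hy => hfix hx hy)
          (Set.ncard_image_le hs.sdiff)
  have hsum := Set.ncard_inter_add_ncard_sdiff_eq_ncard s (f ⁻¹' {c}) hs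
  omega

lemma exists_bool_flip_isBalancedOn_fiber {a : X → X} (ha : a.Involutive) (hfix : ∀ x, a x ≠ x)
    {κ : X → K} (hκ : ∀ k, (κ ⁻¹' {k}).Finite) :
    ∃ f : X → Bool, (∀ x, f (a x) = !f x) ∧ ∀ k, IsBalancedOn f (κ ⁻¹' {k}) := by
  obtain ⟨b, hb, hbκ, hbfix⟩ := exists_involutive_fixedPoints_subsingleton_fiber hκ
  obtain ⟨f, hfa, hfb⟩ := exists_bool_flip_of_involutive_pair ha hb
  exact ⟨f, fun x => hfa x (hfix x), fun k =>
    isBalancedOn_of_flip (hκ k) hb (fun x hx => (hbκ x).trans hx) (hbfix k) hfb⟩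

lemma ncard_inter_preimage_xor_le_two {s : Set X} {f h : X → Bool}
    (hinj : ∀ c, (s ∩ f ⁻¹' {c}).InjOn h) (c : Bool) :
    (s ∩ (fun x => f x ^^ h x) ⁻¹' {c}).ncard ≤ 2 := by
  have hf : (s ∩ (fun x => f x ^^ h x) ⁻¹' {c}).InjOn f := by
    rintro x ⟨hx, rfl⟩ y ⟨hy, hxy⟩ hfxy
    refine hinj (f y) ⟨hx, hfxy⟩ ⟨hy, rfl⟩ ?_
    simpa [hfxy] using hxy.symm
  calc
    _ = (f '' (s ∩ (fun x => f x ^^ h x) ⁻¹' {c})).ncard := hf.ncard_image.symm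
    _ ≤ Nat.card Bool := Set.ncard_le_card _
    _ = 2 := by simp

lemma xor_eq_xor_of_injOn {s : Set X} {f h : X → Bool} (hf : s.InjOn f) (hh : s.InjOn h) {x y : X}
    (hx : x ∈ s) (hy : y ∈ s) : (f x ^^ h x) = (f y ^^ h y) := by
  obtain rfl | hne := eq_or_ne x y
  · rfl
  · rw [Bool.eq_not.2 (hf.ne hx hy hne), Bool.eq_not.2 (hh.ne hx hy hne), Bool.not_xor_not]

end Involution

section Dart

variable {V α : Type*} (G : SimpleGraph V)

/-- The darts of `G` leaving `v`, standing for the edges incident with `v`. -/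
def dartsFrom (v : V) : Set G.Dart := {d | d.fst = v}

/-- An orientation of `G`: of the two darts of each edge, exactly one is marked `true`. -/
def IsOrientation {G : SimpleGraph V} (f : G.Dart → Bool) : Prop := ∀ d, f d.symm = !f d

/-- A proper edge coloring of `G`, given as a function on darts that agrees on the two darts of each
edge. -/
structure IsProperDartColoring {G : SimpleGraph V} (C : G.Dart → α) : Prop where
  symm_apply : ∀ d, C d.symm = C d
  injOn : ∀ v, (dartsFrom G v).InjOn C

lemma range_dartOfNeighborSet (v : V) : Set.range (G.dartOfNeighborSet v) = dartsFrom G v := by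
  ext d
  constructor
  · rintro ⟨w, rfl⟩
    rfl
  · rintro rfl
    exact ⟨⟨d.snd, d.adj⟩, rfl⟩

lemma finite_dartsFrom (v : V) [Finite (G.neighborSet v)] : (dartsFrom G v).Finite :=
  range_dartOfNeighborSet G v ▸ Set.finite_range _

lemma ncard_dartsFrom (v : V) [Fintype (G.neighborSet v)] :
    (dartsFrom G v).ncard = G.degree v := by
  rw [← range_dartOfNeighborSet, Set.ncard_range_of_injective (G.dartOfNeighborSet_injective v),
    Nat.card_eq_fintype_card, G.card_neighborSet_eq_degree]

variable {G}

lemma exists_isOrientation_isBalancedOn [G.LocallyFinite] (r : G.Dart → α) :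
    ∃ f : G.Dart → Bool, IsOrientation f ∧
      ∀ v k, IsBalancedOn f (dartsFrom G v ∩ r ⁻¹' {k}) := by
  have hfiber (v : V) (k : α) :
      (fun d : G.Dart => (d.fst, r d)) ⁻¹' {(v, k)} = dartsFrom G v ∩ r ⁻¹' {k} := by
    ext d
    exact Prod.mk_inj
  obtain ⟨f, hf, hbal⟩ := exists_bool_flip_isBalancedOn_fiber Dart.symm_involutive Dart.symm_ne
    (κ := fun d : G.Dart => (d.fst, r d))
    fun ⟨v, k⟩ => hfiber v k ▸ (finite_dartsFrom G v).inter_of_left _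
  exact ⟨f, hf, fun v k => hfiber v k ▸ hbal (v, k)⟩

lemma IsOrientation.xor_symm {f h : G.Dart → Bool} (hf : IsOrientation f) (hh : IsOrientation h)
    (d : G.Dart) : (f d.symm ^^ h d.symm) = (f d ^^ h d) := by
  rw [hf, hh, Bool.not_xor_not]

lemma exists_isOrientation_isBalancedOn_ite [G.LocallyFinite] (r : G.Dart → α) (P : V → Prop) :
    ∃ f : G.Dart → Bool, IsOrientation f ∧ (∀ v, P v → IsBalancedOn f (dartsFrom G v)) ∧
      ∀ v, ¬ P v → ∀ k, IsBalancedOn f (dartsFrom G v ∩ r ⁻¹' {k}) := by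
  classical
  let r' (d : G.Dart) : Option α := if P d.fst then none else some (r d)
  obtain ⟨f, hf, hbal⟩ := exists_isOrientation_isBalancedOn r'
  refine ⟨f, hf, fun v hv => ?_, fun v hv k => ?_⟩
  · have hnone : dartsFrom G v ⊆ r' ⁻¹' {none} := by
      rintro d rfl
      exact if_pos hv
    simpa only [Set.inter_eq_left.2 hnone] using hbal v none
  · have hsome : dartsFrom G v ∩ r' ⁻¹' {some k} = dartsFrom G v ∩ r ⁻¹' {k} := by
      ext d
      refine and_congr_right ?_
      rintro rfl
      simp [r', hv]
    exact hsome ▸ hbal v (some k)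

-- As in Petersen's 2-factor theorem, `h` two-colors the bipartite double cover of the orientation
-- `f`; at a vertex of degree two both `f` and `h` separate the two darts, so their sum does not.
lemma exists_dart_bool_coloring_ncard_le_two [G.LocallyFinite] (hmax : ∀ v, G.degree v ≤ 4) :
    ∃ g : G.Dart → Bool, (∀ d, g d.symm = g d) ∧
      (∀ v c, (dartsFrom G v ∩ g ⁻¹' {c}).ncard ≤ 2) ∧
      ∀ v, G.degree v = 2 → ∀ d ∈ dartsFrom G v, ∀ e ∈ dartsFrom G v, g d = g e := by
  obtain ⟨f, hf, hbal⟩ := exists_isOrientation_isBalancedOn (fun _ : G.Dart => ())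
  have hfbal (v : V) : IsBalancedOn f (dartsFrom G v) := by simpa using hbal v ()
  obtain ⟨h, hh, hlow, hhigh⟩ := exists_isOrientation_isBalancedOn_ite f fun v => G.degree v ≤ 2
  have hfin (v : V) := finite_dartsFrom G v
  refine ⟨fun d => f d ^^ h d, hf.xor_symm hh, fun v c => ?_, fun v hv d hd e he => ?_⟩
  · by_cases hv : G.degree v ≤ 2
    · exact (Set.ncard_inter_le_ncard_left _ _ (hfin v)).trans (ncard_dartsFrom G v ▸ hv)
    · refine ncard_inter_preimage_xor_le_two (fun c => ?_) c
      refine (hhigh v hv c).injOn ((hfin v).inter_of_left _) ?_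
      have := hfbal v c
      have := ncard_dartsFrom G v
      have := hmax v
      omega
  · have hcard : (dartsFrom G v).ncard ≤ 2 := (ncard_dartsFrom G v).trans_le hv.le
    exact xor_eq_xor_of_injOn ((hfbal v).injOn (hfin v) hcard)
      ((hlow v hv.le).injOn (hfin v) hcard) hd he

lemma exists_isProperDartColoring_prod [G.LocallyFinite] (hbip : G.Colorable 2) {g : G.Dart → α}
    (hsymm : ∀ d, g d.symm = g d) (hg : ∀ v k, (dartsFrom G v ∩ g ⁻¹' {k}).ncard ≤ 2) :
    ∃ t : G.Dart → Bool, IsProperDartColoring fun d => (g d, t d) := by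
  obtain ⟨side⟩ : Nonempty (G.Coloring Bool) := Nonempty.map (G.recolorOfEquiv finTwoEquiv) hbip
  obtain ⟨l, hl, hbal⟩ := exists_isOrientation_isBalancedOn g
  have hside : IsOrientation fun d : G.Dart => side d.fst := fun d =>
    Bool.eq_not.2 (side.valid d.symm.adj)
  refine ⟨fun d => l d ^^ side d.fst, fun d => ?_, fun v d hd e he hde => ?_⟩
  · exact Prod.ext (hsymm d) (hl.xor_symm hside d)
  · obtain ⟨hgde, hlde⟩ := Prod.mk_inj.1 hde
    refine (hbal v (g e)).injOn ((finite_dartsFrom G v).inter_of_left _) (hg v (g e))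
      ⟨hd, hgde⟩ ⟨he, rfl⟩ ?_
    beta_reduce at hlde
    rwa [show d.fst = e.fst from hd.trans (Eq.symm he), Bool.xor_left_inj] at hlde

lemma IsProperDartColoring.comp {β : Type*} {C : G.Dart → α} (hC : IsProperDartColoring C)
    {ε : α → β} (hε : ε.Injective) : IsProperDartColoring (ε ∘ C) :=
  ⟨fun d => congrArg ε (hC.symm_apply d), fun v => hε.comp_injOn (hC.injOn v)⟩

lemma exists_dart_edge_eq {e : Sym2 V} (he : e ∈ G.edgeSet) {v : V} (hv : v ∈ e) :
    ∃ d ∈ dartsFrom G v, d.edge = e := by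
  obtain ⟨w, rfl⟩ := hv
  exact ⟨⟨(v, w), he⟩, rfl, rfl⟩

lemma IsProperDartColoring.exists_isProperEdgeColoring {C : G.Dart → ℕ}
    (hC : IsProperDartColoring C) :
    ∃ c : Sym2 V → ℕ, IsProperEdgeColoring G c ∧ ∀ v, palette G c v = C '' dartsFrom G v := by
  have hfactors : C.FactorsThrough Dart.edge := fun d d' h => by
    obtain rfl | rfl := (dart_edge_eq_iff d d').1 h
    · rfl
    · exact hC.symm_apply d'
  let c : Sym2 V → ℕ := Function.extend Dart.edge C 0
  have hc (d : G.Dart) : c d.edge = C d := hfactors.extend_apply 0 d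
  refine ⟨c, ?_, fun v => Set.ext fun n => ⟨?_, ?_⟩⟩
  · rintro e₁ he₁ e₂ he₂ hne ⟨v, hv₁, hv₂⟩ heq
    obtain ⟨d₁, hd₁, rfl⟩ := exists_dart_edge_eq he₁ hv₁
    obtain ⟨d₂, hd₂, rfl⟩ := exists_dart_edge_eq he₂ hv₂
    rw [hc, hc] at heq
    exact hne (congrArg Dart.edge (hC.injOn v hd₁ hd₂ heq))
  · rintro ⟨e, he, hv, rfl⟩
    obtain ⟨d, hd, rfl⟩ := exists_dart_edge_eq he hv
    exact ⟨d, hd, (hc d).symm⟩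
  · rintro ⟨d, rfl, rfl⟩
    exact ⟨d.edge, d.edge_mem, Sym2.mem_mk_left _ _, hc d⟩

end Dart

section Palette

variable {V α : Type*} {G : SimpleGraph V}

/-- The nonempty sets of colors in `Bool × Bool` whose elements, if there are exactly two, share
their first coordinate: the palettes of the coloring constructed for the main theorem. -/
def admissiblePalettes : Finset (Finset (Bool × Bool)) :=
  {S | S.Nonempty ∧ (#S = 2 → ∀ x ∈ S, ∀ y ∈ S, x.1 = y.1)}

lemma card_admissiblePalettes : #admissiblePalettes = 11 := by decide

lemma card_admissiblePalettes_filter_card_ne_one : #{S ∈ admissiblePalettes | #S ≠ 1} = 7 := by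
  decide

lemma encard_range_palette_le {c : Sym2 V → ℕ} {ε : α → ℕ} {T : Finset (Finset α)}
    (h : ∀ v, ∃ S ∈ T, palette G c v = ε '' S) : (Set.range (palette G c)).encard ≤ #T := by
  have hsub : Set.range (palette G c) ⊆ (fun S : Finset α => ε '' (S : Set α)) '' T := by
    rintro _ ⟨v, rfl⟩
    obtain ⟨S, hS, hv⟩ := h v
    exact ⟨S, hS, hv.symm⟩
  calc
    _ ≤ ((fun S : Finset α => ε '' (S : Set α)) '' T).encard := Set.encard_le_encard hsub
    _ ≤ (T : Set (Finset α)).encard := Set.encard_image_le _ _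
    _ = #T := Set.encard_coe_eq_coe_finsetCard T

lemma paletteIndex_le_of_encard_le {c : Sym2 V → ℕ} (hc : IsProperEdgeColoring G c) {n : ℕ}
    (hn : (Set.range (palette G c)).encard ≤ n) : paletteIndex G ≤ n :=
  calc
    paletteIndex G ≤ (Set.range (palette G c)).ncard := Nat.sInf_le ⟨c, hc, rfl⟩
    _ ≤ n := ENat.toNat_le_of_le_natCast hn

lemma exists_isProperEdgeColoring_palette_admissible [G.LocallyFinite] (hbip : G.Colorable 2)
    (hiso : ∀ v, 0 < G.degree v) (hmax : ∀ v, G.degree v ≤ 4) :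
    ∃ c : Sym2 V → ℕ, IsProperEdgeColoring G c ∧ ∀ v, ∃ S ∈ admissiblePalettes,
      #S = G.degree v ∧ palette G c v = Encodable.encode '' (S : Set (Bool × Bool)) := by
  obtain ⟨g, hsymm, hle, hdeg⟩ := exists_dart_bool_coloring_ncard_le_two hmax
  obtain ⟨t, hC⟩ := exists_isProperDartColoring_prod hbip hsymm hle
  obtain ⟨c, hc, hpal⟩ := (hC.comp Encodable.encode_injective).exists_isProperEdgeColoring
  refine ⟨c, hc, fun v => ?_⟩
  obtain ⟨S, hS⟩ := ((fun d => (g d, t d)) '' dartsFrom G v).toFinite.exists_finset_coe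
  have hcard : #S = G.degree v := by
    rw [← Set.ncard_coe_finset, hS, (hC.injOn v).ncard_image, ncard_dartsFrom]
  refine ⟨S, ?_, hcard, by rw [hpal, Set.image_comp, hS]⟩
  refine mem_filter.2 ⟨mem_univ S, card_pos.1 (hcard ▸ hiso v), fun htwo x hx y hy => ?_⟩
  rw [← mem_coe, hS] at hx hy
  obtain ⟨d, hd, rfl⟩ := hx
  obtain ⟨e, he, rfl⟩ := hy
  exact hdeg v (hcard ▸ htwo) d hd e he

end Palette

-- The bounds are on `encard`, since `paletteIndex` counts infinitely many palettes as zero.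
theorem palette_index_bipartite_deg4_general {V : Type*} (G : SimpleGraph V) [G.LocallyFinite]
    (hbip : G.Colorable 2) (hiso : ∀ v, 0 < G.degree v) (hmax : ∀ v, G.degree v ≤ 4) :
    ∃ c : Sym2 V → ℕ, IsProperEdgeColoring G c ∧ (Set.range (palette G c)).encard ≤ 11 ∧
      ((∀ v, G.degree v ≠ 1) → (Set.range (palette G c)).encard ≤ 7) := by
  obtain ⟨c, hc, hpal⟩ := exists_isProperEdgeColoring_palette_admissible hbip hiso hmax
  refine ⟨c, hc, ?_, fun h1 => ?_⟩
  · rw [← Nat.cast_ofNat, ← card_admissiblePalettes]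
    refine encard_range_palette_le (ε := Encodable.encode) fun v => ?_
    obtain ⟨S, hS, -, hv⟩ := hpal v
    exact ⟨S, hS, hv⟩
  · rw [← Nat.cast_ofNat, ← card_admissiblePalettes_filter_card_ne_one]
    refine encard_range_palette_le (ε := Encodable.encode) fun v => ?_
    obtain ⟨S, hS, hcard, hv⟩ := hpal v
    exact ⟨S, mem_filter.2 ⟨hS, hcard ▸ h1 v⟩, hv⟩

/-- If `G` is a bipartite graph with `Δ(G) = 4` and no isolated vertices, then
`š(G) ≤ 11`; moreover if `G` has no pendant (degree-one) vertices, then `š(G) ≤ 7`. -/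
theorem palette_index_bipartite_deg4 {V : Type*} [Fintype V]
    (G : SimpleGraph V) [DecidableRel G.Adj]
    (hbip : G.Colorable 2)
    (hiso : ∀ v : V, 0 < G.degree v)
    (hmax : G.maxDegree = 4) :
    paletteIndex G ≤ 11 ∧ ((∀ v : V, G.degree v ≠ 1) → paletteIndex G ≤ 7) := by
  obtain ⟨c, hc, h11, h7⟩ := palette_index_bipartite_deg4_general G hbip hiso
    fun v => (G.degree_le_maxDegree v).trans hmax.le
  exact ⟨paletteIndex_le_of_encard_le hc h11, fun h1 => paletteIndex_le_of_encard_le hc (h7 h1)⟩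
end
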